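/- arXiv:math/0012251 — 2 statements merged into one kernel-verified Lean document; each statement's English description precedes it below -/
import Mathlib

section
/- Let R = ℂ[a_1,…,a_m] be graded by positive integer weights w_1,…,w_m, let g ≤ m, let f_1,…,f_{m−g} ∈ R be weighted-homogeneous of positive weighted degrees d_1,…,d_{m−g} such that the Krull dimension of R/(f_1,…,f_{m−g}) is at most g. Let D_1,…,D_g be pairwise commuting ℂ-derivations of R, homogeneous of positive degrees e_1,…,e_g, with D_j f_k = 0 for all j, k. Assume that A_0/(D_1 A_0 + ⋯ + D_g A_0) is finite-dimensional over ℂ, where A_0 = R/(f_1,…,f_{m−g}) (Assumption 1). Then for every point c = (c_1,…,c_{m−g}) ∈ ℂ^{m−g}, setting A_c = R/(f_1 − c_1, …, f_{m−g} − c_{m−g}) with the operators induced by D_1,…,D_g, each cohomology group H^k(C_c^•) of the Koszul-type complex on A_c is finite-dimensional over ℂ, and Σ_{k=0}^g (−1)^k dim_ℂ H^k(C_c^•) = Σ_{k=0}^g (−1)^k dim_ℂ H^k(C_0^•) = (−1)^g · (∏_{j=1}^{m−g} d_j) · (∏_{j=1}^{g} e_j) / (∏_{i=1}^{m} w_i).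 In particular, the Euler characteristic of the complex at a generic point of the parameter space coincides with the Euler characteristic of the complex at the origin. -/
open TensorProduct

noncomputable section

/-- The `k`-th exterior power `Λ^k V` of `V = ℂ^g`, as a submodule of the exterior algebra. -/
def ExtPow (g k : ℕ) : Submodule ℂ (ExteriorAlgebra ℂ (Fin g → ℂ)) := ⋀[ℂ]^k (Fin g → ℂ)

/-- Wedge (on the left) by the `j`-th basis vector `dz_j` of `V = ℂ^g`, as a linear map
`Λ^k V → Λ^{k+1} V`. -/
def wedgeBasis (g k : ℕ) (j : Fin g) : ExtPow g k →ₗ[ℂ] ExtPow g (k + 1) :=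
  LinearMap.codRestrict _
    ((LinearMap.mulLeft ℂ (ExteriorAlgebra.ι ℂ (Pi.single j 1))).comp
      (Submodule.subtype _))
    (fun x => by
      have h1 : ExteriorAlgebra.ι ℂ (Pi.single j (1 : ℂ) : Fin g → ℂ) ∈
          ⋀[ℂ]^1 (Fin g → ℂ) := by
        have h : (⋀[ℂ]^1 (Fin g → ℂ)) =
            LinearMap.range (ExteriorAlgebra.ι ℂ (M := Fin g → ℂ)) := pow_one _
        rw [h]
        exact LinearMap.mem_range_self _ _
      have hx : (x : ExteriorAlgebra ℂ (Fin g → ℂ)) ∈ ⋀[ℂ]^k (Fin g → ℂ) := x.2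
      have := SetLike.mul_mem_graded h1 hx
      show _ ∈ ⋀[ℂ]^(k + 1) (Fin g → ℂ)
      simpa [Nat.add_comm] using this)

variable (M : Type) [AddCommGroup M] [Module ℂ M]

/-- The space of `k`-cochains `C^k = M ⊗ Λ^k V` of the Koszul-type complex. -/
def KCochain (g k : ℕ) : Type := M ⊗[ℂ] ExtPow g k

instance (g k : ℕ) : AddCommGroup (KCochain M g k) :=
  inferInstanceAs (AddCommGroup (M ⊗[ℂ] ExtPow g k))

instance (g k : ℕ) : Module ℂ (KCochain M g k) :=
  inferInstanceAs (Module ℂ (M ⊗[ℂ] ExtPow g k))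

variable {M}

/-- The `k`-th differential `d = Σ_j T_j ⊗ (dz_j ∧ ·) : C^k → C^{k+1}` of the Koszul-type
cochain complex attached to the family of operators `T_j` on `M`. -/
def koszulD (g : ℕ) (T : Fin g → Module.End ℂ M) (k : ℕ) :
    KCochain M g k →ₗ[ℂ] KCochain M g (k + 1) :=
  ∑ j : Fin g, TensorProduct.map (T j) (wedgeBasis g k j)

/-- The differential of the Koszul-type complex arriving at `C^k`: it is `d^{k-1}` for
`k ≥ 1`, and the zero map (from `C^0`) for `k = 0`, so that its range is `0 ⊆ C^0`. -/
def koszulDInto (g : ℕ) (T : Fin g → Module.End ℂ M) :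
    ∀ k : ℕ, KCochain M g (k - 1) →ₗ[ℂ] KCochain M g k
  | 0 => 0
  | k + 1 => koszulD g T k

/-- The `k`-th cohomology `H^k = ker d^k / im d^{k-1}` of the Koszul-type cochain complex
`0 → M → M ⊗ V → ⋯ → M ⊗ Λ^g V → 0`. -/
def KoszulH (g : ℕ) (T : Fin g → Module.End ℂ M) (k : ℕ) : Type :=
  LinearMap.ker (koszulD g T k) ⧸
    Submodule.comap (LinearMap.ker (koszulD g T k)).subtype
      (LinearMap.range (koszulDInto g T k))

instance (g : ℕ) (T : Fin g → Module.End ℂ M) (k : ℕ) : AddCommGroup (KoszulH g T k) :=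
  inferInstanceAs (AddCommGroup (_ ⧸ _))

instance (g : ℕ) (T : Fin g → Module.End ℂ M) (k : ℕ) : Module ℂ (KoszulH g T k) :=
  inferInstanceAs (Module ℂ (_ ⧸ _))


open MvPolynomial

/-!
Since `dim R/(f) ≤ g`, the homogeneous sequence `f` is regular. Hence the leading forms (components
of top weighted degree) of the elements of the ideal `(f_j - c_j)` generate nothing more than
`I = (f)`: the associated graded algebra of the degree filtration of `A_c` is `A_0`, whatever `c`.

Each `T_j` raises the degree and acts by zero on the cohomology of the Koszul complex of `A_0`.
Together with Assumption 1 and Noetherianity this makes that cohomology finite-dimensional, so the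
strands of the complex of `A_0`, graded by total degree, are exact in large degree. Comparing
leading forms, the subcomplex of cochains of `A_c` of total degree `≤ n` is finite-dimensional and
carries the whole cohomology once `n` is large. Its Euler characteristic is a coefficient of the
product of `∏ (X ^ e_j - 1)` and the power series `∏ (1 - X ^ d_j) / ((1 - X) * ∏ (1 - X ^ w_i))`:
a polynomial divided by `1 - X`, whose coefficients are eventually the value of that polynomial at
`1`.
-/

section RegularSequences

open IsLocalRing RingTheory.Sequence

variable {A : Type*} [CommRing A]

theorem isWeaklyRegular_quotient_bot_iff {l : List A} :
    IsWeaklyRegular (A ⧸ (⊥ : Ideal A)) l ↔ IsWeaklyRegular A l :=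
  LinearEquiv.isWeaklyRegular_congr (Submodule.quotEquivOfEqBot (⊥ : Ideal A) rfl) l

open Pointwise in
theorem isWeaklyRegular_quotient_cons_iff (I : Ideal A) (a : A) (l : List A) :
    IsWeaklyRegular (A ⧸ I) (a :: l) ↔
      (∀ x, a * x ∈ I → x ∈ I) ∧ IsWeaklyRegular (A ⧸ (I ⊔ Ideal.span {a})) l := by
  have smul_top_eq : a • (⊤ : Submodule A (A ⧸ I)) = Submodule.map I.mkQ (Ideal.span {a}) := by
    rw [← Submodule.ideal_span_singleton_smul, ← I.range_mkQ, LinearMap.range_eq_map,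
      ← Submodule.map_smul'', smul_eq_mul, Ideal.mul_top]
  rw [isWeaklyRegular_cons_iff, isSMulRegular_quotient_iff_mem_of_smul_mem]
  exact and_congr_right' (LinearEquiv.isWeaklyRegular_congr
    ((Submodule.quotEquivOfEq _ _ smul_top_eq).trans
      (Submodule.quotientQuotientEquivQuotientSup I (Ideal.span {a}))) l)

theorem isWeaklyRegular_quotient_concat_iff (I : Ideal A) (l : List A) (a : A) :
    IsWeaklyRegular (A ⧸ I) (l ++ [a]) ↔
      IsWeaklyRegular (A ⧸ I) l ∧
        ∀ x, a * x ∈ I ⊔ Ideal.ofList l → x ∈ I ⊔ Ideal.ofList l := by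
  induction l generalizing I with
  | nil => simp [isSMulRegular_quotient_iff_mem_of_smul_mem]
  | cons b l ih =>
    rw [List.cons_append, isWeaklyRegular_quotient_cons_iff, ih,
      isWeaklyRegular_quotient_cons_iff, Ideal.ofList_cons, sup_assoc, and_assoc]

theorem mem_of_mul_mem_of_mem_radical {J : Ideal A} {b c : A} (hb : ∀ x, b * x ∈ J → x ∈ J)
    (hrad : b ∈ (J ⊔ Ideal.span {c}).radical) (x : A) (hx : c * x ∈ J) : x ∈ J := by
  obtain ⟨N, hN⟩ := hrad
  rw [sup_comm, Ideal.mem_span_singleton_sup] at hN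
  obtain ⟨s, j, hj, hsj⟩ := hN
  have pow_mul_mem : b ^ N * x ∈ J := by
    rw [← hsj, add_mul, mul_assoc]
    exact J.add_mem (J.mul_mem_left _ hx) (J.mul_mem_right _ hj)
  clear hsj
  induction N with
  | zero => simpa using pow_mul_mem
  | succ N ih => exact ih (hb _ (by rwa [← mul_assoc, ← pow_succ']))

variable [IsLocalRing A] [IsNoetherianRing A]

theorem isWeaklyRegular_quotient_cons_iff_of_mem_maximalIdeal {I : Ideal A} {a : A} {l : List A}
    (hal : ∀ r ∈ a :: l, r ∈ maximalIdeal A) :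
    IsWeaklyRegular (A ⧸ I) (a :: l) ↔
      IsWeaklyRegular (A ⧸ I) l ∧
        ∀ x, a * x ∈ I ⊔ Ideal.ofList l → x ∈ I ⊔ Ideal.ofList l := by
  have hperm : (l ++ [a]).Perm (a :: l) := List.perm_append_singleton a l
  rw [← isWeaklyRegular_quotient_concat_iff]
  exact ⟨fun h => isWeaklyRegular_of_perm_of_subset_maximalIdeal h hperm.symm hal,
    fun h => isWeaklyRegular_of_perm_of_subset_maximalIdeal h hperm
      fun r hr => hal r (hperm.mem_iff.1 hr)⟩

theorem isWeaklyRegular_quotient_cons_exchange {I : Ideal A} {b c : A} {l : List A}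
    (hc : c ∈ maximalIdeal A) (hbl : ∀ r ∈ b :: l, r ∈ maximalIdeal A)
    (hreg : IsWeaklyRegular (A ⧸ I) (b :: l))
    (hrad : b ∈ (I ⊔ Ideal.ofList l ⊔ Ideal.span {c}).radical) :
    IsWeaklyRegular (A ⧸ I) (c :: l) := by
  rw [isWeaklyRegular_quotient_cons_iff_of_mem_maximalIdeal hbl] at hreg
  rw [isWeaklyRegular_quotient_cons_iff_of_mem_maximalIdeal
    (List.forall_mem_cons.2 ⟨hc, (List.forall_mem_cons.1 hbl).2⟩)]
  exact ⟨hreg.1, mem_of_mul_mem_of_mem_radical hreg.2 hrad⟩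

theorem exists_mem_maximalIdeal_forall_notMem_minimalPrimes (J₁ J₂ : Ideal A) :
    ∃ c ∈ maximalIdeal A, ∀ q ∈ J₁.minimalPrimes ∪ J₂.minimalPrimes,
      q ≠ maximalIdeal A → c ∉ q := by
  set S : Set (Ideal A) := (J₁.minimalPrimes ∪ J₂.minimalPrimes) \ {maximalIdeal A}
  have hS : S.Finite := ((J₁.finite_minimalPrimes_of_isNoetherianRing A).union
    (J₂.finite_minimalPrimes_of_isNoetherianRing A)).sdiff
  have hprime : ∀ q ∈ S, q.IsPrime := fun q hq => hq.1.elim (·.1.1) (·.1.1)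
  by_contra! hcover
  obtain ⟨q, hqS, hq⟩ := (Ideal.subset_union_prime_finite hS (f := id) ⊤ ⊤
    (fun q hq _ _ => hprime q hq)).1 fun x (hx : x ∈ maximalIdeal A) => by
      obtain ⟨q, hq, hne, hxq⟩ := hcover x hx
      exact Set.mem_biUnion (⟨hq, hne⟩ : q ∈ S) hxq
  exact hqS.2 (le_antisymm (le_maximalIdeal (hprime q hqS).ne_top) hq)

/- A prime `P` over `J + (c)` other than the maximal ideal has height at most one over `J + (b)`,
so Krull makes it minimal over `J`. -/
theorem maximalIdeal_le_radical_sup_span_of_notMem_minimalPrimes {J : Ideal A} {b c : A}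
    (hJ : J ≤ maximalIdeal A) (hb : b ∈ maximalIdeal A)
    (hrad : maximalIdeal A ≤ (J ⊔ Ideal.span {b}).radical)
    (hc : ∀ q ∈ J.minimalPrimes, q ≠ maximalIdeal A → c ∉ q) :
    maximalIdeal A ≤ (J ⊔ Ideal.span {c}).radical := by
  have span_insert_eq : Ideal.span (insert b (J : Set A)) = J ⊔ Ideal.span {b} := by
    rw [Ideal.span_insert, Ideal.span_eq, sup_comm]
  have maximal_mem : maximalIdeal A ∈ (Ideal.span (insert b (J : Set A))).minimalPrimes := by
    rw [span_insert_eq]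
    exact ⟨⟨inferInstance, sup_le hJ ((Ideal.span_singleton_le_iff_mem _).2 hb)⟩,
      fun Q hQ _ => hrad.trans (hQ.1.radical_le_iff.2 hQ.2)⟩
  rw [Ideal.radical_eq_sInf]
  refine le_sInf fun P ⟨hJP, hP⟩ => ?_
  by_contra hne
  have hlt : P < maximalIdeal A := lt_of_le_not_ge (le_maximalIdeal hP.ne_top) hne
  have minimal_P : P ∈ J.minimalPrimes := by
    have := Ideal.mem_minimalPrimes_span_of_mem_minimalPrimes_span_insert hlt b (J : Set A)
      maximal_mem (J : Set A) (fun x hx => hJP (Ideal.mem_sup_left hx)) (by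
        rw [span_insert_eq]
        exact fun x hx => Ideal.le_radical (Ideal.mem_sup_left hx))
    rwa [Ideal.span_eq] at this
  exact hc P minimal_P hlt.ne (hJP (Ideal.mem_sup_right (Ideal.mem_span_singleton_self c)))

/- Both sequences are exchanged, one entry at a time, through a common `c` chosen outside all the
relevant minimal primes. -/
theorem isWeaklyRegular_of_maximalIdeal_le_radical {I : Ideal A} {bs ts : List A}
    (hlen : ts.length ≤ bs.length) (hI : I ≤ maximalIdeal A)
    (hbs : ∀ r ∈ bs, r ∈ maximalIdeal A) (hts : ∀ r ∈ ts, r ∈ maximalIdeal A)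
    (hreg : IsWeaklyRegular (A ⧸ I) bs)
    (hbs_rad : maximalIdeal A ≤ (I ⊔ Ideal.ofList bs).radical)
    (hts_rad : maximalIdeal A ≤ (I ⊔ Ideal.ofList ts).radical) :
    IsWeaklyRegular (A ⧸ I) ts := by
  induction bs generalizing I ts with
  | nil => exact List.length_eq_zero_iff.1 (Nat.le_zero.1 hlen) ▸ .nil A (A ⧸ I)
  | cons b bs ih =>
    obtain _ | ⟨t, ts⟩ := ts
    · exact .nil A (A ⧸ I)
    have ⟨hb, hbs'⟩ := List.forall_mem_cons.1 hbs
    have ⟨ht, hts'⟩ := List.forall_mem_cons.1 hts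
    have ofList_cons_eq (a : A) (l : List A) :
        I ⊔ Ideal.ofList (a :: l) = I ⊔ Ideal.ofList l ⊔ Ideal.span {a} := by
      rw [Ideal.ofList_cons, sup_assoc, sup_comm (Ideal.span {a})]
    rw [ofList_cons_eq] at hbs_rad hts_rad
    obtain ⟨c, hc, hcq⟩ := exists_mem_maximalIdeal_forall_notMem_minimalPrimes
      (I ⊔ Ideal.ofList bs) (I ⊔ Ideal.ofList ts)
    have hbs_rad' := maximalIdeal_le_radical_sup_span_of_notMem_minimalPrimes
      (sup_le hI (Ideal.span_le.2 hbs')) hb hbs_rad fun q hq => hcq q (.inl hq)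
    have hts_rad' := maximalIdeal_le_radical_sup_span_of_notMem_minimalPrimes
      (sup_le hI (Ideal.span_le.2 hts')) ht hts_rad fun q hq => hcq q (.inr hq)
    have regular_c_bs : IsWeaklyRegular (A ⧸ I) (c :: bs) :=
      isWeaklyRegular_quotient_cons_exchange hc hbs hreg (hbs_rad' hb)
    rw [isWeaklyRegular_quotient_cons_iff] at regular_c_bs
    have regular_ts : IsWeaklyRegular (A ⧸ (I ⊔ Ideal.span {c})) ts :=
      ih (Nat.le_of_succ_le_succ hlen)
        (sup_le hI ((Ideal.span_singleton_le_iff_mem _).2 hc)) hbs' hts' regular_c_bs.2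
        (by rwa [sup_right_comm]) (by rwa [sup_right_comm])
    exact isWeaklyRegular_quotient_cons_exchange ht (List.forall_mem_cons.2 ⟨hc, hts'⟩)
      ((isWeaklyRegular_quotient_cons_iff I c ts).2 ⟨regular_c_bs.1, regular_ts⟩) (hts_rad hc)

end RegularSequences

section LeadingIdeal

open RingTheory.Sequence GradedAlgebra

variable {K A : Type*} [CommRing K] [CommRing A] [Algebra K A]
variable (𝒜 : ℤ → Submodule K A) [GradedAlgebra 𝒜]

/-- The elements of a graded algebra all of whose components of degree `> n` vanish. Degrees are
integers, so that a shift of the filtration never truncates. -/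
def degreeLE (n : ℤ) : Submodule K A := ⨅ k > n, LinearMap.ker (proj 𝒜 k)

variable {𝒜}

theorem mem_degreeLE {n : ℤ} {x : A} : x ∈ degreeLE 𝒜 n ↔ ∀ k > n, proj 𝒜 k x = 0 := by
  simp [degreeLE]

theorem degreeLE_mono : Monotone (degreeLE 𝒜) := fun _ _ hnk _ hx =>
  mem_degreeLE.2 fun j hj => mem_degreeLE.1 hx j (hnk.trans_lt hj)

theorem proj_mem (n : ℤ) (x : A) : proj 𝒜 n x ∈ 𝒜 n := by simp

theorem proj_eq_self_iff {n : ℤ} {x : A} : proj 𝒜 n x = x ↔ x ∈ 𝒜 n :=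
  ⟨fun h => h ▸ proj_mem n x, fun hx => by
    rw [proj_apply, DirectSum.decompose_of_mem_same 𝒜 hx]⟩

theorem proj_eq_zero_of_mem {n k : ℤ} {x : A} (hx : x ∈ 𝒜 k) (hkn : k ≠ n) : proj 𝒜 n x = 0 := by
  rw [proj_apply, DirectSum.decompose_of_mem_ne 𝒜 hx hkn]

theorem le_degreeLE (n : ℤ) : 𝒜 n ≤ degreeLE 𝒜 n := fun _ hx =>
  mem_degreeLE.2 fun _ hk => proj_eq_zero_of_mem hx hk.ne

theorem exists_mem_degreeLE (x : A) : ∃ n, x ∈ degreeLE 𝒜 n := by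
  classical
  obtain ⟨n, hn⟩ := (DirectSum.decompose 𝒜 x).support.bddAbove
  refine ⟨n, mem_degreeLE.2 fun k hk => ?_⟩
  rw [proj_apply, DFinsupp.notMem_support_iff.1 fun hmem => (hn hmem).not_gt hk,
    ZeroMemClass.coe_zero]

theorem degreeLE_inf_ker_proj (n : ℤ) :
    degreeLE 𝒜 n ⊓ LinearMap.ker (proj 𝒜 n) = degreeLE 𝒜 (n - 1) := by
  ext x
  rw [Submodule.mem_inf, mem_degreeLE, mem_degreeLE, LinearMap.mem_ker]
  refine ⟨fun h k hk => ?_, fun h => ⟨fun k hk => h k (by omega), h n (by omega)⟩⟩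
  obtain rfl | hkn := eq_or_ne k n
  exacts [h.2, h.1 k (by omega)]

theorem sub_proj_mem_degreeLE {n : ℤ} {x : A} (hx : x ∈ degreeLE 𝒜 n) :
    x - proj 𝒜 n x ∈ degreeLE 𝒜 (n - 1) := by
  rw [← degreeLE_inf_ker_proj]
  refine ⟨sub_mem hx (le_degreeLE n (proj_mem n x)), LinearMap.mem_ker.2 ?_⟩
  rw [map_sub, proj_eq_self_iff.2 (proj_mem n x), sub_self]

theorem map_proj_degreeLE (n : ℤ) : (degreeLE 𝒜 n).map (proj 𝒜 n) = 𝒜 n :=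
  le_antisymm (Submodule.map_le_iff_le_comap.2 fun x _ => proj_mem n x)
    fun x hx => ⟨x, le_degreeLE n hx, proj_eq_self_iff.2 hx⟩

theorem mul_mem_degreeLE {a b : ℤ} {x y : A} (hx : x ∈ degreeLE 𝒜 a) (hy : y ∈ degreeLE 𝒜 b) :
    x * y ∈ degreeLE 𝒜 (a + b) := by
  classical
  refine mem_degreeLE.2 fun k hk => ?_
  rw [proj_apply, DirectSum.decompose_mul, DirectSum.coe_mul_apply]
  refine Finset.sum_eq_zero fun ij hij => ?_
  have hsum : ij.1 + ij.2 = k := (Finset.mem_filter.1 hij).2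
  obtain hi | hj : ij.1 > a ∨ ij.2 > b := by omega
  · rw [← proj_apply 𝒜, mem_degreeLE.1 hx _ hi, zero_mul]
  · rw [← proj_apply 𝒜 ij.2, mem_degreeLE.1 hy _ hj, mul_zero]

theorem proj_mul_of_mem {d : ℤ} {f : A} (hf : f ∈ 𝒜 d) (n : ℤ) (x : A) :
    proj 𝒜 (n + d) (x * f) = proj 𝒜 n x * f := by
  simp only [proj_apply, DirectSum.coe_decompose_mul_add_of_right_mem 𝒜 hf]

theorem proj_mul_of_mem_degreeLE {a b : ℤ} {x y : A} (hx : x ∈ degreeLE 𝒜 a)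
    (hy : y ∈ degreeLE 𝒜 b) : proj 𝒜 (a + b) (x * y) = proj 𝒜 a x * proj 𝒜 b y := by
  have lower : proj 𝒜 (a + b) (x * (y - proj 𝒜 b y)) = 0 :=
    mem_degreeLE.1 (mul_mem_degreeLE hx (sub_proj_mem_degreeLE hy)) _ (by omega)
  rw [mul_sub, map_sub, sub_eq_zero] at lower
  rw [lower, proj_mul_of_mem (proj_mem b y)]

theorem degreeLE_eq_bot (h𝒜 : ∀ n < 0, 𝒜 n = ⊥) {n : ℤ} (hn : n < 0) : degreeLE 𝒜 n = ⊥ := by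
  refine eq_bot_iff.2 fun x hx => ?_
  have component_eq_zero (k : ℤ) : DirectSum.decompose 𝒜 x k = 0 := by
    refine Subtype.ext ?_
    rw [← proj_apply]
    obtain hk | hk := lt_or_ge n k
    · exact mem_degreeLE.1 hx k hk
    · exact (Submodule.mem_bot K).1 (h𝒜 k (by omega) ▸ proj_mem k x)
  exact (DirectSum.decompose 𝒜).injective (DFinsupp.ext fun k => by simp [component_eq_zero k])

theorem proj_mem_of_isHomogeneous {I : Ideal A} (hI : I.IsHomogeneous 𝒜) (n : ℤ) {x : A}
    (hx : x ∈ I) : proj 𝒜 n x ∈ I := hI n hx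

variable (𝒜) in
/-- `I` is the leading-form ideal of `J`: in every degree `n` its elements are the degree `n`
components of the elements of `J` of degree at most `n`. -/
def IsLeadingIdeal (I J : Ideal A) : Prop :=
  ∀ n, (degreeLE 𝒜 n ⊓ J.restrictScalars K).map (proj 𝒜 n) = 𝒜 n ⊓ I.restrictScalars K

namespace IsLeadingIdeal

variable {I J : Ideal A}

theorem proj_mem_of_mem (h : IsLeadingIdeal 𝒜 I J) {n : ℤ} {x : A} (hx : x ∈ degreeLE 𝒜 n)
    (hxJ : x ∈ J) : proj 𝒜 n x ∈ I :=
  ((h n).le (Submodule.mem_map_of_mem ⟨hx, hxJ⟩)).2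

theorem exists_sub_mem (h : IsLeadingIdeal 𝒜 I J) {n : ℤ} {x : A} (hx : x ∈ 𝒜 n) (hxI : x ∈ I) :
    ∃ y ∈ degreeLE 𝒜 (n - 1), x - y ∈ J := by
  obtain ⟨z, ⟨hz, hzJ⟩, rfl⟩ := (h n).ge ⟨hx, hxI⟩
  refine ⟨-(z - proj 𝒜 n z), neg_mem (sub_proj_mem_degreeLE hz), ?_⟩
  rwa [sub_neg_eq_add, add_sub_cancel]

theorem of_forall (hproj : ∀ n, ∀ x ∈ degreeLE 𝒜 n, x ∈ J → proj 𝒜 n x ∈ I)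
    (hsub : ∀ n, ∀ x ∈ 𝒜 n, x ∈ I → ∃ y ∈ degreeLE 𝒜 (n - 1), x - y ∈ J) :
    IsLeadingIdeal 𝒜 I J := by
  refine fun n => le_antisymm ?_ fun x ⟨hx, hxI⟩ => ?_
  · rintro _ ⟨x, ⟨hx, hxJ⟩, rfl⟩
    exact ⟨proj_mem n x, hproj n x hx hxJ⟩
  · obtain ⟨y, hy, hxy⟩ := hsub n x hx hxI
    refine ⟨x - y, ⟨sub_mem (le_degreeLE n hx) (degreeLE_mono (by omega) hy), hxy⟩, ?_⟩
    rw [map_sub, proj_eq_self_iff.2 hx, mem_degreeLE.1 hy n (by omega), sub_zero]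

theorem of_isHomogeneous (hI : I.IsHomogeneous 𝒜) : IsLeadingIdeal 𝒜 I I :=
  of_forall (fun n _ _ hx => proj_mem_of_isHomogeneous hI n hx)
    fun n _ _ hx => ⟨0, zero_mem _, by rwa [sub_zero]⟩

/-- If `g * p` has degree larger than `x`, then the top component of `g` lies in `I`, by
regularity of the leading form of `p`, so modulo `J` the multiplier `g` may be replaced by one of
smaller degree. -/
theorem exists_mul_add_eq (h : IsLeadingIdeal 𝒜 I J) {d : ℤ} {p : A} (hp : p ∈ degreeLE 𝒜 d)
    (hreg : ∀ x, proj 𝒜 d p * x ∈ I → x ∈ I) {n : ℤ} {x : A} (hx : x ∈ degreeLE 𝒜 n)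
    (hxJ : x ∈ J ⊔ Ideal.span {p}) :
    ∃ g ∈ degreeLE 𝒜 (n - d), ∃ y ∈ J, g * p + y = x := by
  have lower_multiplier : ∀ E ≥ n - d, (∃ g ∈ degreeLE 𝒜 E, ∃ y ∈ J, g * p + y = x) →
      ∃ g ∈ degreeLE 𝒜 (n - d), ∃ y ∈ J, g * p + y = x := by
    refine fun E hE => Int.leInduction id (fun E hE ih => ?_) E hE
    rintro ⟨g, hg, y, hy, rfl⟩
    have hgp : g * p ∈ degreeLE 𝒜 (E + 1 + d) := mul_mem_degreeLE hg hp
    have hyE : y ∈ degreeLE 𝒜 (E + 1 + d) := by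
      simpa using sub_mem (degreeLE_mono (show n ≤ E + 1 + d by omega) hx) hgp
    have top_eq_zero := mem_degreeLE.1 hx (E + 1 + d) (by omega)
    rw [map_add, proj_mul_of_mem_degreeLE hg hp] at top_eq_zero
    have top_mem : proj 𝒜 (E + 1) g ∈ I := hreg _ <| by
      rw [mul_comm, eq_neg_of_add_eq_zero_left top_eq_zero]
      exact I.neg_mem (h.proj_mem_of_mem hyE hy)
    obtain ⟨z, hz, hzJ⟩ := h.exists_sub_mem (proj_mem (E + 1) g) top_mem
    refine ih ⟨g - proj 𝒜 (E + 1) g + z, ?_, y + (proj 𝒜 (E + 1) g - z) * p,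
      J.add_mem hy (J.mul_mem_right p hzJ), by ring⟩
    simpa using add_mem (sub_proj_mem_degreeLE hg) hz
  rw [sup_comm, Ideal.mem_span_singleton_sup] at hxJ
  obtain ⟨g, y, hy, hgy⟩ := hxJ
  obtain ⟨E, hg⟩ := exists_mem_degreeLE (𝒜 := 𝒜) g
  exact lower_multiplier (max E (n - d)) (le_max_right _ _)
    ⟨g, degreeLE_mono (le_max_left _ _) hg, y, hy, hgy⟩

theorem sup_span_singleton (h : IsLeadingIdeal 𝒜 I J) (hI : I.IsHomogeneous 𝒜) {d : ℤ} {p : A}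
    (hp : p ∈ degreeLE 𝒜 d) (hreg : ∀ x, proj 𝒜 d p * x ∈ I → x ∈ I) :
    IsLeadingIdeal 𝒜 (I ⊔ Ideal.span {proj 𝒜 d p}) (J ⊔ Ideal.span {p}) := by
  refine of_forall (fun n x hx hxJ => ?_) fun n x hx hxI => ?_
  · obtain ⟨g, hg, y, hy, rfl⟩ := h.exists_mul_add_eq hp hreg hx hxJ
    have hgp : g * p ∈ degreeLE 𝒜 n := by simpa using mul_mem_degreeLE hg hp
    have hyn : y ∈ degreeLE 𝒜 n := by simpa using sub_mem hx hgp
    have proj_eq := proj_mul_of_mem_degreeLE hg hp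
    rw [sub_add_cancel] at proj_eq
    rw [map_add, proj_eq, sup_comm, Ideal.mem_span_singleton_sup]
    exact ⟨_, _, h.proj_mem_of_mem hyn hy, rfl⟩
  · rw [sup_comm, Ideal.mem_span_singleton_sup] at hxI
    obtain ⟨a, i, hi, hai⟩ := hxI
    obtain ⟨y, hy, hiy⟩ :=
      h.exists_sub_mem (proj_mem n i) (proj_mem_of_isHomogeneous hI n hi)
    have hxn : proj 𝒜 (n - d) a * proj 𝒜 d p + proj 𝒜 n i = x := by
      rw [← proj_mul_of_mem (proj_mem d p), sub_add_cancel, ← map_add, hai,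
        proj_eq_self_iff.2 hx]
    refine ⟨y - proj 𝒜 (n - d) a * (p - proj 𝒜 d p), sub_mem hy ?_, ?_⟩
    · exact degreeLE_mono (by omega) (mul_mem_degreeLE
        (le_degreeLE _ (proj_mem (n - d) a)) (sub_proj_mem_degreeLE hp))
    · rw [sup_comm, Ideal.mem_span_singleton_sup]
      exact ⟨proj 𝒜 (n - d) a, proj 𝒜 n i - y, hiy, by rw [← hxn]; ring⟩

theorem sup_ofList {ps fs : List A}
    (hlead : List.Forall₂ (fun p f => ∃ d, p ∈ degreeLE 𝒜 d ∧ proj 𝒜 d p = f) ps fs)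
    (h : IsLeadingIdeal 𝒜 I J) (hI : I.IsHomogeneous 𝒜) (hreg : IsWeaklyRegular (A ⧸ I) fs) :
    IsLeadingIdeal 𝒜 (I ⊔ Ideal.ofList fs) (J ⊔ Ideal.ofList ps) := by
  induction hlead generalizing I J with
  | nil => simpa using h
  | cons hpf _ ih =>
    obtain ⟨d, hp, rfl⟩ := hpf
    rw [isWeaklyRegular_quotient_cons_iff] at hreg
    rw [Ideal.ofList_cons, Ideal.ofList_cons, ← sup_assoc, ← sup_assoc]
    refine ih (h.sup_span_singleton hI hp hreg.1) (hI.sup (Ideal.homogeneous_span 𝒜 _ ?_)) hreg.2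
    rintro _ rfl
    exact ⟨d, proj_mem d _⟩

end IsLeadingIdeal

end LeadingIdeal

theorem finrank_map_add_finrank_inf_ker {K V W : Type*} [Field K] [AddCommGroup V] [Module K V]
    [AddCommGroup W] [Module K W] (φ : V →ₗ[K] W) (S : Submodule K V) [FiniteDimensional K S] :
    Module.finrank K (S.map φ) + Module.finrank K (S ⊓ LinearMap.ker φ : Submodule K V) =
      Module.finrank K S := by
  have ker_domRestrict :
      (LinearMap.ker (φ.domRestrict S)).map S.subtype = S ⊓ LinearMap.ker φ := by
    rw [LinearMap.domRestrict, LinearMap.ker_comp, Submodule.map_comap_subtype]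
  rw [← ker_domRestrict, Submodule.finrank_map_subtype_eq, ← LinearMap.range_domRestrict,
    LinearMap.finrank_range_add_finrank_ker]

section HilbertSeries

open RingTheory.Sequence GradedAlgebra

variable {K A : Type*} [Field K] [CommRing A] [Algebra K A]
variable (𝒜 : ℤ → Submodule K A)

/-- The degree `n` piece of the quotient of a graded algebra by an ideal. -/
def quotientGrade (I : Ideal A) (n : ℤ) : Submodule K (A ⧸ I) :=
  (𝒜 n).map (Ideal.Quotient.mkₐ K I).toLinearMap

/-- The Hilbert function of the quotient of a graded algebra by an ideal. -/
def hilbertFunction (I : Ideal A) (n : ℤ) : ℕ := Module.finrank K (quotientGrade 𝒜 I n)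

/-- The Hilbert series of the quotient of a graded algebra by an ideal; only the degrees `≥ 0` are
recorded. -/
def hilbertSeries (I : Ideal A) : PowerSeries ℚ := PowerSeries.mk fun n => hilbertFunction 𝒜 I n

variable {𝒜}

theorem ker_mkₐ_toLinearMap (I : Ideal A) :
    LinearMap.ker (Ideal.Quotient.mkₐ K I).toLinearMap = I.restrictScalars K := by
  ext x
  exact Ideal.Quotient.eq_zero_iff_mem

theorem hilbertFunction_of_neg (h𝒜 : ∀ n < 0, 𝒜 n = ⊥) (I : Ideal A) {n : ℤ} (hn : n < 0) :
    hilbertFunction 𝒜 I n = 0 := by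
  rw [hilbertFunction, quotientGrade, h𝒜 n hn, Submodule.map_bot, finrank_bot]

theorem map_factor_quotientGrade {I L : Ideal A} (hIL : I ≤ L) (n : ℤ) :
    (quotientGrade 𝒜 I n).map (Ideal.Quotient.factorₐ K hIL).toLinearMap =
      quotientGrade 𝒜 L n := by
  rw [quotientGrade, quotientGrade, ← Submodule.map_comp]
  rfl

section Graded

variable [GradedAlgebra 𝒜]

theorem quotientGrade_inf_ker_factor {I : Ideal A} (hI : I.IsHomogeneous 𝒜) {d : ℤ} {f : A}
    (hf : f ∈ 𝒜 d) (n : ℤ) :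
    quotientGrade 𝒜 I n ⊓ LinearMap.ker
        (Ideal.Quotient.factorₐ K (le_sup_left (a := I) (b := Ideal.span {f}))).toLinearMap =
      (quotientGrade 𝒜 I (n - d)).map (LinearMap.mulLeft K (Ideal.Quotient.mk I f)) := by
  ext y
  constructor
  · rintro ⟨⟨x, hx, rfl⟩, hy⟩
    have hxf : x ∈ I ⊔ Ideal.span {f} := Ideal.Quotient.eq_zero_iff_mem.1 hy
    rw [sup_comm, Ideal.mem_span_singleton_sup] at hxf
    obtain ⟨a, i, hi, hai⟩ := hxf
    refine ⟨Ideal.Quotient.mk I (proj 𝒜 (n - d) a), ⟨_, proj_mem _ a, rfl⟩, ?_⟩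
    have hxn : proj 𝒜 (n - d) a * f + proj 𝒜 n i = x := by
      rw [← proj_mul_of_mem hf, sub_add_cancel, ← map_add, hai, proj_eq_self_iff.2 hx]
    refine (Ideal.Quotient.eq (I := I)).2 ?_
    rw [← hxn, mul_comm, sub_add_cancel_left]
    exact I.neg_mem (proj_mem_of_isHomogeneous hI n hi)
  · rintro ⟨_, ⟨a, ha, rfl⟩, rfl⟩
    refine ⟨⟨f * a, by simpa using SetLike.mul_mem_graded hf ha, rfl⟩, ?_⟩
    exact Ideal.Quotient.eq_zero_iff_mem.2 <| Ideal.mul_mem_right _ _ <|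
      Ideal.mem_sup_right (Ideal.mem_span_singleton_self f)

theorem hilbertFunction_sup_span_singleton [∀ n, FiniteDimensional K (𝒜 n)] {I : Ideal A}
    (hI : I.IsHomogeneous 𝒜) {d : ℤ} {f : A} (hf : f ∈ 𝒜 d) (hreg : ∀ x, f * x ∈ I → x ∈ I)
    (n : ℤ) :
    hilbertFunction 𝒜 (I ⊔ Ideal.span {f}) n + hilbertFunction 𝒜 I (n - d) =
      hilbertFunction 𝒜 I n := by
  have hfin : FiniteDimensional K (quotientGrade 𝒜 I n) := by
    unfold quotientGrade; infer_instance
  have mul_injective : Function.Injective (LinearMap.mulLeft K (Ideal.Quotient.mk I f)) := by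
    rw [← LinearMap.ker_eq_bot, LinearMap.ker_eq_bot']
    intro y hy
    obtain ⟨x, rfl⟩ := Ideal.Quotient.mk_surjective y
    exact Ideal.Quotient.eq_zero_iff_mem.2 (hreg x (Ideal.Quotient.eq_zero_iff_mem.1 hy))
  have h := finrank_map_add_finrank_inf_ker
    (Ideal.Quotient.factorₐ K (le_sup_left (a := I) (b := Ideal.span {f}))).toLinearMap
    (quotientGrade 𝒜 I n)
  rwa [map_factor_quotientGrade, quotientGrade_inf_ker_factor hI hf,
    ← (Submodule.equivMapOfInjective _ mul_injective _).finrank_eq] at h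

theorem hilbertSeries_sup_span_singleton [∀ n, FiniteDimensional K (𝒜 n)]
    (h𝒜 : ∀ n < 0, 𝒜 n = ⊥) {I : Ideal A} (hI : I.IsHomogeneous 𝒜) {d : ℕ} {f : A}
    (hf : f ∈ 𝒜 d) (hreg : ∀ x, f * x ∈ I → x ∈ I) :
    hilbertSeries 𝒜 (I ⊔ Ideal.span {f}) = hilbertSeries 𝒜 I * (1 - PowerSeries.X ^ d) := by
  ext n
  rw [mul_sub, mul_one, map_sub, PowerSeries.coeff_mul_X_pow', hilbertSeries, hilbertSeries,
    PowerSeries.coeff_mk, PowerSeries.coeff_mk,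
    ← hilbertFunction_sup_span_singleton hI hf hreg n]
  split_ifs with hd
  · simp [hd]
  · rw [hilbertFunction_of_neg h𝒜 I (by omega), add_zero, sub_zero]

theorem hilbertSeries_sup_ofList [∀ n, FiniteDimensional K (𝒜 n)] (h𝒜 : ∀ n < 0, 𝒜 n = ⊥)
    {fs : List A} {ds : List ℕ} (hfs : List.Forall₂ (fun f d => f ∈ 𝒜 (d : ℕ)) fs ds)
    {I : Ideal A} (hI : I.IsHomogeneous 𝒜) (hreg : IsWeaklyRegular (A ⧸ I) fs) :
    hilbertSeries 𝒜 (I ⊔ Ideal.ofList fs) =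
      hilbertSeries 𝒜 I * (ds.map fun d => 1 - PowerSeries.X ^ d).prod := by
  induction hfs generalizing I with
  | nil => simp
  | @cons f d _ _ hf _ ih =>
    rw [isWeaklyRegular_quotient_cons_iff] at hreg
    have hIf : (I ⊔ Ideal.span {f}).IsHomogeneous 𝒜 :=
      hI.sup <| Ideal.homogeneous_span 𝒜 _ fun _ hx => ⟨d, Set.mem_singleton_iff.1 hx ▸ hf⟩
    rw [Ideal.ofList_cons, ← sup_assoc, ih hIf hreg.2,
      hilbertSeries_sup_span_singleton h𝒜 hI hf hreg.1, List.map_cons, List.prod_cons, mul_assoc]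

theorem finiteDimensional_degreeLE [∀ n, FiniteDimensional K (𝒜 n)] (h𝒜 : ∀ n < 0, 𝒜 n = ⊥)
    (n : ℤ) : FiniteDimensional K (degreeLE 𝒜 n) := by
  have finiteDimensional_of_neg : ∀ k < 0, FiniteDimensional K (degreeLE 𝒜 k) := fun k hk => by
    rw [degreeLE_eq_bot h𝒜 hk]
    infer_instance
  obtain hn | hn := lt_or_ge n 0
  · exact finiteDimensional_of_neg n hn
  refine Int.leInduction (finiteDimensional_of_neg (-1) (by omega)) (fun k _ _ => ?_) n
    (show -1 ≤ n by omega)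
  refine Submodule.finiteDimensional_of_le (S₂ := degreeLE 𝒜 k ⊔ 𝒜 (k + 1)) fun x hx => ?_
  rw [← sub_add_cancel x (proj 𝒜 (k + 1) x)]
  refine add_mem (Submodule.mem_sup_left ?_) (Submodule.mem_sup_right (proj_mem _ x))
  simpa using sub_proj_mem_degreeLE hx

variable (𝒜) in
/-- The filtration by degree on the quotient of a graded algebra by an ideal, homogeneous or
not. -/
def quotientDegreeLE (J : Ideal A) (n : ℤ) : Submodule K (A ⧸ J) :=
  (degreeLE 𝒜 n).map (Ideal.Quotient.mkₐ K J).toLinearMap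

theorem IsLeadingIdeal.degreeLE_inf_ker_mkₐ_comp_proj {I J : Ideal A}
    (h : IsLeadingIdeal 𝒜 I J) (n : ℤ) :
    degreeLE 𝒜 n ⊓ LinearMap.ker ((Ideal.Quotient.mkₐ K I).toLinearMap ∘ₗ proj 𝒜 n) =
      degreeLE 𝒜 (n - 1) ⊔ degreeLE 𝒜 n ⊓ J.restrictScalars K := by
  have degreeLE_sub_one_le : degreeLE 𝒜 (n - 1) ≤ degreeLE 𝒜 n := degreeLE_mono (by omega)
  rw [LinearMap.ker_comp, ker_mkₐ_toLinearMap]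
  refine le_antisymm ?_ (sup_le (fun x hx => ⟨degreeLE_sub_one_le hx, ?_⟩)
    fun x ⟨hx, hxJ⟩ => ⟨hx, h.proj_mem_of_mem hx hxJ⟩)
  · rintro x ⟨hx, hxI⟩
    obtain ⟨y, hy, hxy⟩ := h.exists_sub_mem (proj_mem n x) hxI
    rw [show x = (x - proj 𝒜 n x + y) + (proj 𝒜 n x - y) by ring]
    exact Submodule.add_mem_sup (add_mem (sub_proj_mem_degreeLE hx) hy)
      ⟨sub_mem (le_degreeLE n (proj_mem n x)) (degreeLE_sub_one_le hy), hxy⟩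
  · have proj_eq_zero : proj 𝒜 n x = 0 := mem_degreeLE.1 hx n (by omega)
    exact (Submodule.mem_comap (p := I.restrictScalars K)).2 (proj_eq_zero ▸ zero_mem _)

/-- Both sides are computed from `degreeLE 𝒜 n`: on the one hand by reduction modulo `J`, on the
other hand by passing to leading forms modulo `I`. -/
theorem IsLeadingIdeal.finrank_quotientDegreeLE [∀ n, FiniteDimensional K (𝒜 n)]
    (h𝒜 : ∀ n < 0, 𝒜 n = ⊥) {I J : Ideal A} (h : IsLeadingIdeal 𝒜 I J) (n : ℤ) :
    Module.finrank K (quotientDegreeLE 𝒜 J n) =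
      Module.finrank K (quotientDegreeLE 𝒜 J (n - 1)) + hilbertFunction 𝒜 I n := by
  have := finiteDimensional_degreeLE h𝒜
  have degreeLE_sub_one_le : degreeLE 𝒜 (n - 1) ≤ degreeLE 𝒜 n := degreeLE_mono (by omega)
  have mod_J := finrank_map_add_finrank_inf_ker (Ideal.Quotient.mkₐ K J).toLinearMap
    (degreeLE 𝒜 n)
  have leading_forms := finrank_map_add_finrank_inf_ker
    ((Ideal.Quotient.mkₐ K I).toLinearMap ∘ₗ proj 𝒜 n) (degreeLE 𝒜 n)
  have kernel_mod_J := finrank_map_add_finrank_inf_ker (Ideal.Quotient.mkₐ K J).toLinearMap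
    (degreeLE 𝒜 (n - 1) ⊔ degreeLE 𝒜 n ⊓ LinearMap.ker (Ideal.Quotient.mkₐ K J).toLinearMap)
  rw [Submodule.map_comp, map_proj_degreeLE, h.degreeLE_inf_ker_mkₐ_comp_proj,
    ← ker_mkₐ_toLinearMap] at leading_forms
  have map_inf_ker_eq_bot :
      (degreeLE 𝒜 n ⊓ LinearMap.ker (Ideal.Quotient.mkₐ K J).toLinearMap).map
        (Ideal.Quotient.mkₐ K J).toLinearMap = ⊥ :=
    (Submodule.map_mono inf_le_right).trans (Submodule.map_le_iff_le_comap.2 le_rfl) |> le_bot_iff.1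
  have inf_ker_eq :
      (degreeLE 𝒜 (n - 1) ⊔ degreeLE 𝒜 n ⊓ LinearMap.ker (Ideal.Quotient.mkₐ K J).toLinearMap) ⊓
          LinearMap.ker (Ideal.Quotient.mkₐ K J).toLinearMap =
        degreeLE 𝒜 n ⊓ LinearMap.ker (Ideal.Quotient.mkₐ K J).toLinearMap :=
    le_antisymm (inf_le_inf_right _ (sup_le degreeLE_sub_one_le inf_le_left))
      (le_inf le_sup_right inf_le_right)
  rw [Submodule.map_sup, map_inf_ker_eq_bot, sup_bot_eq, inf_ker_eq] at kernel_mod_J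
  unfold quotientDegreeLE hilbertFunction quotientGrade
  omega

theorem quotientDegreeLE_mono (J : Ideal A) : Monotone (quotientDegreeLE 𝒜 J) :=
  fun _ _ h => Submodule.map_mono (degreeLE_mono h)

theorem quotientDegreeLE_eq_bot (h𝒜 : ∀ n < 0, 𝒜 n = ⊥) (J : Ideal A) {n : ℤ} (hn : n < 0) :
    quotientDegreeLE 𝒜 J n = ⊥ := by
  rw [quotientDegreeLE, degreeLE_eq_bot h𝒜 hn, Submodule.map_bot]

theorem IsLeadingIdeal.mk_finrank_quotientDegreeLE_mul [∀ n, FiniteDimensional K (𝒜 n)]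
    (h𝒜 : ∀ n < 0, 𝒜 n = ⊥) {I J : Ideal A} (h : IsLeadingIdeal 𝒜 I J) :
    PowerSeries.mk (fun n : ℕ => (Module.finrank K (quotientDegreeLE 𝒜 J n) : ℚ)) *
      (1 - PowerSeries.X) = hilbertSeries 𝒜 I := by
  ext n
  rw [mul_sub, mul_one, map_sub, hilbertSeries, PowerSeries.coeff_mk, PowerSeries.coeff_mk,
    h.finrank_quotientDegreeLE h𝒜]
  obtain _ | n := n
  · rw [PowerSeries.coeff_zero_mul_X, quotientDegreeLE_eq_bot h𝒜 J (by simp)]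
    simp
  · rw [PowerSeries.coeff_succ_mul_X, PowerSeries.coeff_mk, Nat.cast_succ, add_sub_cancel_right]
    push_cast
    ring

end Graded

end HilbertSeries

section RegularityOfParameters

open RingTheory.Sequence GradedAlgebra

variable {A : Type*} [CommRing A]

theorem exists_list_mem_minimalPrimes_sup [IsNoetherianRing A] {I P : Ideal A} [P.IsPrime]
    (hIP : I ≤ P) {g : ℕ} (hdim : ringKrullDim (A ⧸ I) ≤ (g : WithBot ℕ∞)) :
    ∃ l : List A, l.length ≤ g ∧ (∀ x ∈ l, x ∈ P) ∧ P ∈ (I ⊔ Ideal.ofList l).minimalPrimes := by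
  classical
  let P' := P.map (Ideal.Quotient.mk I)
  have hP' : P'.IsPrime := Ideal.isPrime_map_quotientMk_of_isPrime hIP
  obtain ⟨s, hP's, hs⟩ := Ideal.exists_finset_card_eq_height_of_isNoetherianRing P'
  have surjOn : Set.SurjOn (Ideal.Quotient.mk I) P s := fun y hy =>
    (Ideal.mem_map_iff_of_surjective _ Ideal.Quotient.mk_surjective).1
      (hP's.1.2 (Ideal.subset_span hy))
  obtain ⟨t, htP, htinj, rfl⟩ := Finset.exists_subset_injOn_image_eq_of_surjOn _ s surjOn
  have card_le : t.card ≤ g := by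
    have hheight : ((Finset.card (t.image (Ideal.Quotient.mk I)) : ℕ∞) : WithBot ℕ∞) ≤ g := by
      rw [hs]
      exact (Ideal.height_le_ringKrullDim_of_ne_top hP'.ne_top).trans hdim
    rw [Finset.card_image_of_injOn htinj] at hheight
    exact_mod_cast hheight
  have ofList_eq : Ideal.ofList t.toList = Ideal.span t := by
    simp only [Ideal.ofList, Finset.mem_toList, Finset.setOfPred_mem]
  refine ⟨t.toList, t.length_toList.trans_le card_le,
    fun x hx => htP (Finset.mem_toList.1 hx), Ideal.mem_minimalPrimes_sup hIP ?_⟩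
  rwa [ofList_eq, Ideal.map_span, ← Finset.coe_image]

theorem isWeaklyRegular_localizationAtPrime_of_ringKrullDim_le [IsNoetherianRing A] {P : Ideal A}
    [P.IsPrime] {xs fs : List A} (hxs : IsWeaklyRegular A xs) (hxsP : Ideal.ofList xs = P)
    (hfsP : ∀ f ∈ fs, f ∈ P) {g : ℕ} (hlen : fs.length + g ≤ xs.length)
    (hdim : ringKrullDim (A ⧸ Ideal.ofList fs) ≤ (g : WithBot ℕ∞)) :
    IsWeaklyRegular (Localization.AtPrime P)
      (fs.map (algebraMap A (Localization.AtPrime P))) := by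
  set S := Localization.AtPrime P
  have : IsNoetherianRing S := IsLocalization.isNoetherianRing P.primeCompl S inferInstance
  have maximalIdeal_eq : P.map (algebraMap A S) = IsLocalRing.maximalIdeal S :=
    IsLocalization.AtPrime.map_eq_maximalIdeal P S
  have mem_maximalIdeal (l : List A) (hl : ∀ x ∈ l, x ∈ P) :
      ∀ r ∈ l.map (algebraMap A S), r ∈ IsLocalRing.maximalIdeal S := by
    rw [← maximalIdeal_eq]
    exact List.forall_mem_map.2 fun x hx => Ideal.mem_map_of_mem _ (hl x hx)
  obtain ⟨l, hlg, hlP, hmin⟩ :=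
    exists_list_mem_minimalPrimes_sup (Ideal.span_le.2 hfsP : Ideal.ofList fs ≤ P) hdim
  have hreg : IsWeaklyRegular (S ⧸ (⊥ : Ideal S)) ((fs ++ l).map (algebraMap A S)) := by
    refine isWeaklyRegular_of_maximalIdeal_le_radical (bs := xs.map (algebraMap A S))
      ?_ bot_le (mem_maximalIdeal _ fun x hx => hxsP ▸ Ideal.subset_span hx)
      (mem_maximalIdeal _ (List.forall_mem_append.2 ⟨hfsP, hlP⟩)) ?_ ?_ ?_
    · simp only [List.length_map, List.length_append]
      omega
    · exact isWeaklyRegular_quotient_bot_iff.2 (hxs.of_isLocalization S P.primeCompl)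
    · rw [bot_sup_eq, ← Ideal.map_ofList, hxsP, maximalIdeal_eq]
      exact Ideal.le_radical
    · rw [bot_sup_eq, ← Ideal.map_ofList, Ideal.ofList_append, ← maximalIdeal_eq]
      exact (IsLocalization.AtPrime.radical_map_of_mem_minimalPrimes S P _ hmin).ge
  rw [isWeaklyRegular_quotient_bot_iff, List.map_append, isWeaklyRegular_append_iff] at hreg
  exact hreg.1

section Graded

variable {K : Type*} [CommRing K] [Algebra K A] {𝒜 : ℤ → Submodule K A} [GradedAlgebra 𝒜]

theorem mem_of_mul_mem_of_isUnit_proj_zero {I : Ideal A} (hI : I.IsHomogeneous 𝒜) {u : A}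
    (hu : IsUnit (proj 𝒜 0 u)) {n : ℤ} {y : A} (hy : y ∈ 𝒜 n) (huy : u * y ∈ I) : y ∈ I := by
  have lowest_component := proj_mem_of_isHomogeneous hI (0 + n) huy
  rw [proj_mul_of_mem hy] at lowest_component
  exact (Ideal.unit_mul_mem_iff_mem I hu).1 lowest_component

theorem isWeaklyRegular_of_isLocalization_of_isUnit_proj_zero {M : Submonoid A}
    (hM : ∀ u ∈ M, IsUnit (proj 𝒜 0 u)) (S : Type*) [CommRing S] [Algebra A S]
    [IsLocalization M S] {fs : List A} (hfs : ∀ f ∈ fs, SetLike.IsHomogeneousElem 𝒜 f)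
    {I : Ideal A} (hI : I.IsHomogeneous 𝒜)
    (hreg : IsWeaklyRegular (S ⧸ I.map (algebraMap A S)) (fs.map (algebraMap A S))) :
    IsWeaklyRegular (A ⧸ I) fs := by
  induction fs generalizing I with
  | nil => exact .nil A _
  | cons f fs ih =>
    rw [List.forall_mem_cons] at hfs
    rw [List.map_cons, isWeaklyRegular_quotient_cons_iff] at hreg
    obtain ⟨d, hf⟩ := hfs.1
    rw [isWeaklyRegular_quotient_cons_iff]
    refine ⟨fun x hx => (Ideal.IsHomogeneous.mem_iff 𝒜 hI).2 fun n => ?_, ih hfs.2 ?_ ?_⟩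
    · rw [← proj_apply]
      have component_mul_mem : f * proj 𝒜 n x ∈ I := by
        rw [mul_comm, ← proj_mul_of_mem hf, mul_comm]
        exact proj_mem_of_isHomogeneous hI _ hx
      have localized_mem := hreg.1 (algebraMap A S (proj 𝒜 n x))
        (by rw [← map_mul]; exact Ideal.mem_map_of_mem _ component_mul_mem)
      obtain ⟨u, hu, hux⟩ :=
        (IsLocalization.algebraMap_mem_map_algebraMap_iff M S I _).1 localized_mem
      exact mem_of_mul_mem_of_isUnit_proj_zero hI (hM u hu) (proj_mem n x) hux
    · refine hI.sup (Ideal.homogeneous_span 𝒜 _ ?_)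
      rintro _ rfl
      exact ⟨d, hf⟩
    · rw [Ideal.map_sup, Ideal.map_span, Set.image_singleton]
      exact hreg.2

end Graded

end RegularityOfParameters

section WeightGrading

open RingTheory.Sequence GradedAlgebra

variable {K σ : Type*} [Field K]

variable (K) in
/-- The grading of a polynomial ring by weights, extended by zero to negative degrees. -/
abbrev weightGrading (w : σ → ℕ) : ℤ → Submodule K (MvPolynomial σ K) :=
  weightedHomogeneousSubmodule K fun i => (w i : ℤ)

instance (w : σ → ℕ) : GradedAlgebra (weightGrading K w) := weightedGradedAlgebra K _

theorem weight_natCast (w : σ → ℕ) (s : σ →₀ ℕ) :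
    Finsupp.weight (fun i => (w i : ℤ)) s = Finsupp.weight w s := by
  simp [Finsupp.weight_apply, Finsupp.sum]

theorem coeff_proj_weightGrading (w : σ → ℕ) (n : ℤ) (p : MvPolynomial σ K) (s : σ →₀ ℕ) :
    coeff s (proj (weightGrading K w) n p) =
      if (Finsupp.weight w s : ℤ) = n then coeff s p else 0 := by
  classical
  rw [proj_apply, ← weight_natCast, ← coeff_weightedHomogeneousComponent,
    ← weightedDecomposition.decompose'_apply]
  rfl

theorem mem_weightGrading_natCast {w : σ → ℕ} {n : ℕ} {p : MvPolynomial σ K} :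
    p ∈ weightGrading K w n ↔ p.IsWeightedHomogeneous w n := by
  simp only [mem_weightedHomogeneousSubmodule, IsWeightedHomogeneous, weight_natCast,
    Nat.cast_inj]

theorem weightGrading_eq_bot (w : σ → ℕ) (n : ℤ) (hn : n < 0) : weightGrading K w n = ⊥ := by
  refine eq_bot_iff.2 fun p hp => (Submodule.mem_bot K).2 (MvPolynomial.ext _ _ fun s => ?_)
  by_contra hs
  have := (weight_natCast w s).symm.trans (hp hs)
  omega

theorem finiteDimensional_weightGrading [Finite σ] {w : σ → ℕ} (hw : ∀ i, 0 < w i) (n : ℤ) :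
    FiniteDimensional K (weightGrading K w n) := by
  obtain hn | hn := lt_or_ge n 0
  · rw [weightGrading_eq_bot w n hn]
    infer_instance
  lift n to ℕ using hn
  have hgrade : weightGrading K w n = weightedHomogeneousSubmodule K w n :=
    Submodule.ext fun _ => mem_weightGrading_natCast
  rw [hgrade]
  exact Module.Finite.iff_fg.2 (weightedHomogeneousSubmodule_fg K w (fun i => (hw i).ne') n)

theorem proj_zero_weightGrading {w : σ → ℕ} (hw : ∀ i, 0 < w i) (p : MvPolynomial σ K) :
    proj (weightGrading K w) 0 p = C (constantCoeff p) := by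
  classical
  ext s
  have := Finsupp.nonTorsionWeight_of (w := w) ℕ fun i => (hw i).ne'
  simp only [coeff_proj_weightGrading, coeff_C, Nat.cast_eq_zero,
    Finsupp.weight_eq_zero_iff_eq_zero, eq_comm (a := s)]
  split_ifs with h
  exacts [h ▸ rfl, rfl]

theorem mem_idealOfVars_iff {p : MvPolynomial σ K} :
    p ∈ idealOfVars σ K ↔ constantCoeff p = 0 := by
  rw [← pow_one (idealOfVars σ K), mem_pow_idealOfVars_iff']
  simp [Finsupp.degree_eq_zero_iff, constantCoeff_eq]

instance : (idealOfVars σ K).IsPrime := by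
  have : idealOfVars σ K = RingHom.ker (constantCoeff (σ := σ) (R := K)) :=
    Ideal.ext fun _ => mem_idealOfVars_iff
  rw [this]
  exact RingHom.ker_isPrime _

theorem isWeaklyRegular_map_X (s : Set σ) {l : List σ} (hl : l.Nodup) (hls : ∀ i ∈ l, i ∉ s) :
    IsWeaklyRegular (MvPolynomial σ K ⧸ Ideal.span (X '' s : Set (MvPolynomial σ K)))
      (l.map (X : σ → MvPolynomial σ K)) := by
  induction l generalizing s with
  | nil => exact .nil _ _
  | cons i l ih =>
    rw [List.nodup_cons] at hl
    rw [List.forall_mem_cons] at hls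
    rw [List.map_cons, isWeaklyRegular_quotient_cons_iff]
    refine ⟨fun x hx => ?_, ?_⟩
    · rw [mem_ideal_span_X_image] at hx ⊢
      intro t ht
      have ht' : t + Finsupp.single i 1 ∈ (X i * x).support := by
        rw [MvPolynomial.mem_support_iff, mul_comm, coeff_mul_X]
        exact MvPolynomial.mem_support_iff.1 ht
      obtain ⟨j, hj, hne⟩ := hx _ ht'
      have hij : i ≠ j := fun h => hls.1 (h ▸ hj)
      exact ⟨j, hj, by simpa [Finsupp.single_apply, hij] using hne⟩
    · rw [sup_comm, ← Ideal.span_insert, ← Set.image_insert_eq]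
      refine ih _ hl.2 fun j hj => ?_
      rintro (rfl | hjs)
      exacts [hl.1 hj, hls.2 j hj hjs]

theorem isWeaklyRegular_map_X_toList [Fintype σ] :
    IsWeaklyRegular (MvPolynomial σ K ⧸ (⊥ : Ideal (MvPolynomial σ K)))
      ((Finset.univ : Finset σ).toList.map (X : σ → MvPolynomial σ K)) := by
  have h := isWeaklyRegular_map_X (K := K) ∅ (Finset.nodup_toList (Finset.univ : Finset σ))
    fun i _ => id
  rwa [Set.image_empty, Ideal.span_empty] at h

theorem ofList_map_X_toList [Fintype σ] :
    Ideal.ofList ((Finset.univ : Finset σ).toList.map (X : σ → MvPolynomial σ K)) =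
      idealOfVars σ K := by
  simp [Ideal.ofList, idealOfVars, Set.range]

theorem isWeaklyRegular_of_ringKrullDim_quotient_le [Fintype σ] {w : σ → ℕ} (hw : ∀ i, 0 < w i)
    {fs : List (MvPolynomial σ K)} (hfs : ∀ f ∈ fs, ∃ d > 0, f.IsWeightedHomogeneous w d) {g : ℕ}
    (hlen : fs.length + g ≤ Fintype.card σ)
    (hdim : ringKrullDim (MvPolynomial σ K ⧸ Ideal.ofList fs) ≤ (g : WithBot ℕ∞)) :
    IsWeaklyRegular (MvPolynomial σ K ⧸ (⊥ : Ideal (MvPolynomial σ K))) fs := by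
  have mem_idealOfVars : ∀ f ∈ fs, f ∈ idealOfVars σ K := fun f hf => by
    obtain ⟨d, hd, hfd⟩ := hfs f hf
    exact mem_idealOfVars_iff.2 (hfd.coeff_eq_zero 0 (by simpa using hd.ne))
  refine isWeaklyRegular_of_isLocalization_of_isUnit_proj_zero (𝒜 := weightGrading K w)
    (M := (idealOfVars σ K).primeCompl) (fun u hu => ?_)
    (Localization.AtPrime (idealOfVars σ K)) (fun f hf => ?_) (Ideal.IsHomogeneous.bot _) ?_
  · rw [proj_zero_weightGrading hw]
    exact (IsUnit.mk0 _ fun h => hu (mem_idealOfVars_iff.2 h)).map C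
  · obtain ⟨d, -, hfd⟩ := hfs f hf
    exact ⟨d, mem_weightGrading_natCast.2 hfd⟩
  · rw [Ideal.map_bot, isWeaklyRegular_quotient_bot_iff]
    exact isWeaklyRegular_localizationAtPrime_of_ringKrullDim_le
      (isWeaklyRegular_quotient_bot_iff.1 isWeaklyRegular_map_X_toList) ofList_map_X_toList
      mem_idealOfVars (by simpa using hlen) hdim

theorem hilbertSeries_idealOfVars {w : σ → ℕ} (hw : ∀ i, 0 < w i) :
    hilbertSeries (weightGrading K w) (idealOfVars σ K) = 1 := by
  ext n
  rw [hilbertSeries, PowerSeries.coeff_mk, PowerSeries.coeff_one, hilbertFunction]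
  split_ifs with hn
  · have grade_zero : quotientGrade (weightGrading K w) (idealOfVars σ K) n =
        Submodule.span K {1} := by
      rw [hn, quotientGrade, Nat.cast_zero]
      ext y
      rw [Submodule.mem_map, Submodule.mem_span_singleton]
      constructor
      · rintro ⟨x, hx, rfl⟩
        refine ⟨constantCoeff x, ?_⟩
        conv_rhs => rw [← proj_eq_self_iff.2 hx, proj_zero_weightGrading hw, ← algebraMap_eq,
          AlgHom.toLinearMap_apply, AlgHom.commutes, Algebra.algebraMap_eq_smul_one]
      · rintro ⟨a, rfl⟩
        exact ⟨C a, isWeightedHomogeneous_C _ a, by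
          rw [← algebraMap_eq, AlgHom.toLinearMap_apply, AlgHom.commutes,
            Algebra.algebraMap_eq_smul_one]⟩
    rw [grade_zero, finrank_span_singleton one_ne_zero, Nat.cast_one]
  · have grade_pos : quotientGrade (weightGrading K w) (idealOfVars σ K) n = ⊥ := by
      refine LinearMap.le_ker_iff_map.1 fun p hp => ?_
      rw [ker_mkₐ_toLinearMap]
      refine mem_idealOfVars_iff.2 ((mem_weightGrading_natCast.1 hp).coeff_eq_zero 0 ?_)
      rw [map_zero]
      exact Ne.symm hn
    rw [grade_pos, finrank_bot, Nat.cast_zero]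

theorem hilbertSeries_bot_mul_prod [Fintype σ] {w : σ → ℕ} (hw : ∀ i, 0 < w i) :
    hilbertSeries (weightGrading K w) ⊥ * ∏ i, (1 - PowerSeries.X ^ w i) = 1 := by
  have := finiteDimensional_weightGrading (K := K) hw
  have hfs : List.Forall₂ (fun f d => f ∈ weightGrading K w (d : ℕ))
      ((Finset.univ : Finset σ).toList.map X) (Finset.univ.toList.map w) := by
    simp only [List.forall₂_map_left_iff, List.forall₂_map_right_iff, List.forall₂_same]
    exact fun i _ => mem_weightGrading_natCast.2 (isWeightedHomogeneous_X K w i)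
  have h := hilbertSeries_sup_ofList (weightGrading_eq_bot w) hfs (Ideal.IsHomogeneous.bot _)
    isWeaklyRegular_map_X_toList
  rw [ofList_map_X_toList, bot_sup_eq, hilbertSeries_idealOfVars hw, List.map_map,
    Finset.prod_map_toList] at h
  exact h.symm

theorem hilbertSeries_mul_prod [Fintype σ] {w : σ → ℕ} (hw : ∀ i, 0 < w i) {r : ℕ}
    {f : Fin r → MvPolynomial σ K} {d : Fin r → ℕ}
    (hf : ∀ j, (f j).IsWeightedHomogeneous w (d j))
    (hreg : IsWeaklyRegular (MvPolynomial σ K ⧸ (⊥ : Ideal (MvPolynomial σ K))) (List.ofFn f)) :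
    hilbertSeries (weightGrading K w) (Ideal.ofList (List.ofFn f)) *
      ∏ i, (1 - PowerSeries.X ^ w i) = ∏ j, (1 - PowerSeries.X ^ d j) := by
  have := finiteDimensional_weightGrading (K := K) hw
  have hfs : List.Forall₂ (fun f d => f ∈ weightGrading K w (d : ℕ)) (List.ofFn f)
      (List.ofFn d) := by
    simp only [List.ofFn_eq_map, List.forall₂_map_left_iff, List.forall₂_map_right_iff,
      List.forall₂_same]
    exact fun j _ => mem_weightGrading_natCast.2 (hf j)
  have h := hilbertSeries_sup_ofList (weightGrading_eq_bot w) hfs (Ideal.IsHomogeneous.bot _) hreg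
  rw [bot_sup_eq] at h
  rw [h, mul_right_comm, hilbertSeries_bot_mul_prod hw, one_mul, List.map_ofFn, List.prod_ofFn]
  rfl

end WeightGrading

section ExteriorPower

variable {g k : ℕ}

theorem sum_powersetCard_eq_sum_ofFinEmbEquiv_symm {N : Type*} [AddCommMonoid N]
    (s : Set.powersetCard (Fin g) k) (e : Fin g → N) :
    ∑ i ∈ s.1, e i = ∑ l, e (Set.powersetCard.ofFinEmbEquiv.symm s l) := by
  conv_lhs => rw [← Finset.map_orderEmbOfFin_univ s.1 s.2, Finset.sum_map]
  rfl

theorem exists_perm_of_coord_exteriorPower_ne_zero (s : Set.powersetCard (Fin g) k)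
    (v : Fin k → Fin g)
    (h : (((Pi.basisFun ℂ (Fin g)).exteriorPower k).coord s)
      (exteriorPower.ιMulti ℂ k fun l => Pi.single (v l) 1) ≠ 0) :
    ∃ σ : Equiv.Perm (Fin k), ∀ l, v (σ l) = Set.powersetCard.ofFinEmbEquiv.symm s l := by
  rw [exteriorPower.basis_coord, exteriorPower.ιMultiDual_apply_ιMulti, Matrix.det_apply] at h
  obtain ⟨σ, -, hσ⟩ := Finset.exists_ne_zero_of_sum_ne_zero h
  refine ⟨σ, fun l => ?_⟩
  by_contra hl
  refine hσ (smul_eq_zero_of_right _ (Finset.prod_eq_zero (Finset.mem_univ l) ?_))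
  simp [Ne.symm hl]

variable (g k) in
/-- The basis of `Λ^k V` formed by the products `dz_{i_1} ∧ ⋯ ∧ dz_{i_k}` with
`i_1 < ⋯ < i_k`. -/
def extPowBasis : Module.Basis (Set.powersetCard (Fin g) k) ℂ (ExtPow g k) :=
  (Pi.basisFun ℂ (Fin g)).exteriorPower k

/-- The matrix coefficients of `dz_j ∧ · : Λ^k V → Λ^{k+1} V`. -/
def wedgeCoeff (j : Fin g) (s : Set.powersetCard (Fin g) (k + 1))
    (s' : Set.powersetCard (Fin g) k) : ℂ :=
  (extPowBasis g (k + 1)).coord s (wedgeBasis g k j (extPowBasis g k s'))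

theorem wedgeBasis_extPowBasis (j : Fin g) (s' : Set.powersetCard (Fin g) k) :
    wedgeBasis g k j (extPowBasis g k s') = exteriorPower.ιMulti ℂ (k + 1) fun l =>
      Pi.single ((Fin.cons j (Set.powersetCard.ofFinEmbEquiv.symm s') :
        Fin (k + 1) → Fin g) l) 1 := by
  have hbasis : ((extPowBasis g k s' : ExtPow g k) : ExteriorAlgebra ℂ (Fin g → ℂ)) =
      ExteriorAlgebra.ιMulti ℂ k
        (Pi.basisFun ℂ (Fin g) ∘ Set.powersetCard.ofFinEmbEquiv.symm s') :=
    congrArg Subtype.val (exteriorPower.basis_apply ℂ k (Pi.basisFun ℂ (Fin g)) s')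
  refine Subtype.ext ?_
  rw [exteriorPower.ιMulti_apply_coe, ExteriorAlgebra.ιMulti_succ_apply]
  change ExteriorAlgebra.ι ℂ _ * ((extPowBasis g k s' : ExtPow g k) :
    ExteriorAlgebra ℂ (Fin g → ℂ)) = _
  rw [hbasis, Fin.cons_zero]
  congr 2
  funext l
  simp [Matrix.vecTail]

theorem sum_eq_add_sum_of_wedgeCoeff_ne_zero {N : Type*} [AddCommMonoid N] {j : Fin g}
    {s : Set.powersetCard (Fin g) (k + 1)} {s' : Set.powersetCard (Fin g) k}
    (h : wedgeCoeff j s s' ≠ 0) (e : Fin g → N) :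
    ∑ i ∈ s.1, e i = e j + ∑ i ∈ s'.1, e i := by
  rw [wedgeCoeff, wedgeBasis_extPowBasis] at h
  obtain ⟨σ, hσ⟩ := exists_perm_of_coord_exteriorPower_ne_zero s _ h
  let v : Fin (k + 1) → Fin g := Fin.cons j (Set.powersetCard.ofFinEmbEquiv.symm s')
  calc ∑ i ∈ s.1, e i = ∑ l, e (v (σ l)) := by
        rw [sum_powersetCard_eq_sum_ofFinEmbEquiv_symm]
        exact Finset.sum_congr rfl fun l _ => congrArg e (hσ l).symm
    _ = ∑ l, e (v l) := Equiv.sum_comp σ fun l => e (v l)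
    _ = e j + ∑ i ∈ s'.1, e i := by
        rw [sum_powersetCard_eq_sum_ofFinEmbEquiv_symm, Fin.sum_univ_succ]
        rfl

theorem wedgeBasis_wedgeBasis (i j : Fin g) (ω : ExtPow g k) :
    wedgeBasis g (k + 1) i (wedgeBasis g k j ω) =
      -wedgeBasis g (k + 1) j (wedgeBasis g k i ω) := by
  refine Subtype.ext ?_
  change ExteriorAlgebra.ι ℂ _ * (ExteriorAlgebra.ι ℂ _ * ω.1) =
    -(ExteriorAlgebra.ι ℂ _ * (ExteriorAlgebra.ι ℂ _ * ω.1))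
  rw [← mul_assoc, ← mul_assoc, ← neg_mul,
    eq_neg_of_add_eq_zero_left (ExteriorAlgebra.ι_add_mul_swap _ _)]

theorem extPow_succ (g k : ℕ) :
    ExtPow g (k + 1) = LinearMap.range (ExteriorAlgebra.ι ℂ (M := Fin g → ℂ)) * ExtPow g k :=
  pow_succ' _ k

open CliffordAlgebra in
theorem contractLeft_eq_zero_of_mem_extPow_zero (δ : Module.Dual ℂ (Fin g → ℂ))
    {ω : ExteriorAlgebra ℂ (Fin g → ℂ)} (hω : ω ∈ ExtPow g 0) : contractLeft δ ω = 0 := by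
  obtain ⟨r, rfl⟩ := Submodule.mem_one.1 (show ω ∈ 1 from hω)
  exact contractLeft_algebraMap (0 : QuadraticForm ℂ (Fin g → ℂ)) δ r

open CliffordAlgebra in
theorem contractLeft_mem_extPow (δ : Module.Dual ℂ (Fin g → ℂ))
    {ω : ExteriorAlgebra ℂ (Fin g → ℂ)} (hω : ω ∈ ExtPow g k) :
    (contractLeft δ ω : ExteriorAlgebra ℂ (Fin g → ℂ)) ∈ ExtPow g (k - 1) := by
  induction k generalizing ω with
  | zero =>
    rw [contractLeft_eq_zero_of_mem_extPow_zero δ hω]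
    exact zero_mem _
  | succ k ih =>
    rw [extPow_succ] at hω
    induction hω using Submodule.mul_induction_on' with
    | mem_mul_mem x hx y hy =>
      obtain ⟨v, rfl⟩ := hx
      rw [contractLeft_ι_mul]
      refine sub_mem (Submodule.smul_mem _ _ hy) ?_
      cases k with
      | zero =>
        rw [contractLeft_eq_zero_of_mem_extPow_zero δ hy, mul_zero]
        exact zero_mem _
      | succ k =>
        rw [Nat.add_sub_cancel, extPow_succ]
        exact Submodule.mul_mem_mul ⟨v, rfl⟩ (ih hy)
    | add x _ y _ hx hy =>
      rw [map_add]
      exact add_mem hx hy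

variable (g k) in
/-- Contraction with the `j`-th coordinate form of `V = ℂ^g`, as a linear map
`Λ^k V → Λ^{k-1} V`; it vanishes for `k = 0`. -/
def contraction (j : Fin g) : ExtPow g k →ₗ[ℂ] ExtPow g (k - 1) :=
  LinearMap.restrict (CliffordAlgebra.contractLeft (Q := (0 : QuadraticForm ℂ (Fin g → ℂ)))
    (LinearMap.proj j)) fun _ hx => contractLeft_mem_extPow _ hx

theorem coe_contraction_wedgeBasis (i j : Fin g) (ω : ExtPow g k) :
    (contraction g (k + 1) j (wedgeBasis g k i ω) : ExteriorAlgebra ℂ (Fin g → ℂ)) =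
      ((if i = j then ω else 0 : ExtPow g k) : ExteriorAlgebra ℂ (Fin g → ℂ)) -
        ExteriorAlgebra.ι ℂ (Pi.single i 1) * (contraction g k j ω).1 := by
  refine (CliffordAlgebra.contractLeft_ι_mul _ _ _).trans (congrArg₂ _ ?_ rfl)
  rcases eq_or_ne i j with rfl | hij
  · simp
  · simp [hij, hij.symm]

theorem contraction_wedgeBasis_zero (i j : Fin g) (ω : ExtPow g 0) :
    contraction g 1 j (wedgeBasis g 0 i ω) = if i = j then ω else 0 := by
  refine Subtype.ext ?_
  have hω : (contraction g 0 j ω).1 = 0 :=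
    contractLeft_eq_zero_of_mem_extPow_zero _ ω.2
  rw [coe_contraction_wedgeBasis, hω, mul_zero, sub_zero]

theorem contraction_wedgeBasis_succ (i j : Fin g) (ω : ExtPow g (k + 1)) :
    contraction g (k + 2) j (wedgeBasis g (k + 1) i ω) =
      (if i = j then ω else 0) - wedgeBasis g k i (contraction g (k + 1) j ω) :=
  Subtype.ext (coe_contraction_wedgeBasis i j ω)

end ExteriorPower

section Koszul

namespace KCochain

variable {N : Type} [AddCommGroup N] [Module ℂ N] {g k : ℕ}

/-- The pure tensors `x ⊗ ω` in `M ⊗ Λ^k V`. -/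
def tmul : M →ₗ[ℂ] ExtPow g k →ₗ[ℂ] KCochain M g k := TensorProduct.mk ℂ M (ExtPow g k)

@[elab_as_elim]
theorem induction_on {p : KCochain M g k → Prop} (z : KCochain M g k) (zero : p 0)
    (tmul : ∀ x ω, p (tmul x ω)) (add : ∀ x y, p x → p y → p (x + y)) : p z :=
  TensorProduct.induction_on (motive := p) z zero tmul add

/-- A cochain as the family of its coordinates in the basis `extPowBasis` of `Λ^k V`. -/
def equivFun : KCochain M g k ≃ₗ[ℂ] (Set.powersetCard (Fin g) k → M) :=
  (TensorProduct.equivFinsuppOfBasisRight (extPowBasis g k)).trans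
    (Finsupp.linearEquivFunOnFinite ℂ M _)

/-- The coordinate of a cochain along a basis vector of `Λ^k V`. -/
def coord (s : Set.powersetCard (Fin g) k) : KCochain M g k →ₗ[ℂ] M :=
  LinearMap.proj s ∘ₗ equivFun.toLinearMap

theorem coord_ext {z z' : KCochain M g k} (h : ∀ s, coord s z = coord s z') : z = z' :=
  equivFun.injective (funext h)

theorem coord_equivFun_symm (x : Set.powersetCard (Fin g) k → M) (s) :
    coord s (equivFun.symm x) = x s :=
  congrFun (equivFun.apply_symm_apply x) s

theorem coord_tmul (s : Set.powersetCard (Fin g) k) (x : M) (ω : ExtPow g k) :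
    coord s (tmul x ω) = (extPowBasis g k).coord s ω • x :=
  TensorProduct.equivFinsuppOfBasisRight_apply_tmul_apply _ x ω s

theorem eq_zero_of_lt (hk : g < k) (z : KCochain M g k) : z = 0 :=
  coord_ext fun s => absurd (s.2 ▸ Finset.card_le_univ s.1) (by simpa using hk)

/-- The sum of the degrees `e_j` over the factors `dz_j` of a basis vector of `Λ^k V`. -/
def basisDegree (e : Fin g → ℤ) (s : Set.powersetCard (Fin g) k) : ℤ := ∑ j ∈ s.1, e j

/-- The map of cochains induced by a family of linear maps indexed by degrees: the coordinate
along a basis vector of degree `m` is mapped by `π (n + m)`. -/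
def gradedMap (π : ℤ → M →ₗ[ℂ] N) (e : Fin g → ℤ) (n : ℤ) : KCochain M g k →ₗ[ℂ] KCochain N g k :=
  equivFun.symm.toLinearMap ∘ₗ LinearMap.pi fun s => π (n + basisDegree e s) ∘ₗ coord s

/-- The map of cochains induced by a linear map. -/
abbrev map (φ : M →ₗ[ℂ] N) : KCochain M g k →ₗ[ℂ] KCochain N g k := gradedMap (fun _ => φ) 0 0

@[simp]
theorem coord_gradedMap (π : ℤ → M →ₗ[ℂ] N) (e : Fin g → ℤ) (n : ℤ) (z : KCochain M g k) (s) :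
    coord s (gradedMap π e n z) = π (n + basisDegree e s) (coord s z) :=
  coord_equivFun_symm _ s

theorem map_tmul (φ : M →ₗ[ℂ] N) (x : M) (ω : ExtPow g k) :
    map φ (tmul x ω) = tmul (φ x) ω :=
  coord_ext fun s => by rw [coord_gradedMap, coord_tmul, coord_tmul, map_smul]

section Differential

variable {T : Fin g → Module.End ℂ M} {T' : Fin g → Module.End ℂ N}

theorem koszulD_tmul (T : Fin g → Module.End ℂ M) (x : M) (ω : ExtPow g k) :
    koszulD g T k (tmul x ω) = ∑ j, tmul (T j x) (wedgeBasis g k j ω) :=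
  LinearMap.sum_apply Finset.univ (fun j => TensorProduct.map (T j) (wedgeBasis g k j)) _

theorem coord_koszulD (T : Fin g → Module.End ℂ M) (z : KCochain M g k) (s) :
    coord s (koszulD g T k z) = ∑ j, ∑ s', wedgeCoeff j s s' • T j (coord s' z) := by
  induction z using induction_on with
  | zero => simp only [map_zero, smul_zero, Finset.sum_const_zero]
  | add x y hx hy => simp only [map_add, hx, hy, smul_add, Finset.sum_add_distrib]
  | tmul x ω =>
    rw [koszulD_tmul, map_sum]
    refine Finset.sum_congr rfl fun j _ => ?_
    rw [coord_tmul]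
    conv_lhs => rw [← (extPowBasis g k).sum_repr ω, map_sum, map_sum, Finset.sum_smul]
    refine Finset.sum_congr rfl fun s' _ => ?_
    rw [coord_tmul, map_smul, map_smul, map_smul, smul_smul, smul_eq_mul, mul_comm]
    rfl

theorem koszulD_koszulD (hT : ∀ i j, Commute (T i) (T j)) (z : KCochain M g k) :
    koszulD g T (k + 1) (koszulD g T k z) = 0 := by
  induction z using induction_on with
  | zero => rw [map_zero, map_zero]
  | add x y hx hy => rw [map_add, map_add, hx, hy, add_zero]
  | tmul x ω =>
    have antisymm : koszulD g T (k + 1) (koszulD g T k (tmul x ω)) =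
        -koszulD g T (k + 1) (koszulD g T k (tmul x ω)) := by
      simp only [koszulD_tmul, map_sum]
      conv_rhs => rw [Finset.sum_comm]
      simp only [← Finset.sum_neg_distrib]
      refine Finset.sum_congr rfl fun i _ => Finset.sum_congr rfl fun j _ => ?_
      rw [wedgeBasis_wedgeBasis, map_neg, ← Module.End.mul_apply, (hT j i).eq,
        Module.End.mul_apply]
    have : IsAddTorsionFree (KCochain M g (k + 1 + 1)) := .of_isTorsionFree ℂ _
    exact self_eq_neg.1 antisymm

theorem koszulD_koszulDInto (hT : ∀ i j, Commute (T i) (T j)) (z : KCochain M g (k - 1)) :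
    koszulD g T k (koszulDInto g T k z) = 0 := by
  cases k with
  | zero => exact map_zero _
  | succ k => exact koszulD_koszulD hT z

theorem gradedMap_koszulD {π : ℤ → M →ₗ[ℂ] N} {e : Fin g → ℤ}
    (hπ : ∀ j n x, π (n + e j) (T j x) = T' j (π n x)) (n : ℤ) (z : KCochain M g k) :
    gradedMap π e n (koszulD g T k z) = koszulD g T' k (gradedMap π e n z) := by
  refine coord_ext fun s => ?_
  simp only [coord_gradedMap, coord_koszulD, map_sum, map_smul]
  refine Finset.sum_congr rfl fun j _ => Finset.sum_congr rfl fun s' _ => ?_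
  by_cases hc : wedgeCoeff j s s' = 0
  · simp only [hc, zero_smul]
  · rw [← hπ, basisDegree, sum_eq_add_sum_of_wedgeCoeff_ne_zero hc, add_comm (e j), ← add_assoc]
    rfl

theorem gradedMap_koszulDInto {π : ℤ → M →ₗ[ℂ] N} {e : Fin g → ℤ}
    (hπ : ∀ j n x, π (n + e j) (T j x) = T' j (π n x)) (n : ℤ) (z : KCochain M g (k - 1)) :
    gradedMap π e n (koszulDInto g T k z) = koszulDInto g T' k (gradedMap π e n z) := by
  cases k with
  | zero => exact map_zero _
  | succ k => exact gradedMap_koszulD hπ n z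

/-- The homotopy `x ⊗ ω ↦ x ⊗ (contraction of ω)` from `T_j` to zero on the Koszul complex. -/
def homotopy (j : Fin g) : KCochain M g (k + 1) →ₗ[ℂ] KCochain M g k :=
  LinearMap.lTensor M (contraction g (k + 1) j)

theorem homotopy_tmul (j : Fin g) (x : M) (ω : ExtPow g (k + 1)) :
    homotopy j (tmul x ω) = tmul x (contraction g (k + 1) j ω) := rfl

theorem sum_tmul_ite (T : Fin g → Module.End ℂ M) (j : Fin g) (x : M) (ω : ExtPow g k) :
    ∑ i, tmul (T i x) (if i = j then ω else 0) = tmul (T j x) ω := by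
  rw [Finset.sum_eq_single_of_mem j (Finset.mem_univ j) fun i _ hij => by rw [if_neg hij, map_zero],
    if_pos rfl]

theorem homotopy_koszulD_zero (T : Fin g → Module.End ℂ M) (j : Fin g) (z : KCochain M g 0) :
    homotopy j (koszulD g T 0 z) = map (T j) z := by
  induction z using induction_on with
  | zero => simp only [map_zero]
  | add x y hx hy => simp only [map_add, hx, hy]
  | tmul x ω =>
    rw [map_tmul, ← sum_tmul_ite, koszulD_tmul, map_sum]
    exact Finset.sum_congr rfl fun i _ =>
      congrArg (tmul (T i x)) (contraction_wedgeBasis_zero i j ω)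

theorem koszulD_homotopy_add_homotopy_koszulD (T : Fin g → Module.End ℂ M) (j : Fin g)
    (z : KCochain M g (k + 1)) :
    koszulD g T k (homotopy j z) + homotopy j (koszulD g T (k + 1) z) = map (T j) z := by
  induction z using induction_on with
  | zero => simp only [map_zero, add_zero]
  | add x y hx hy =>
    simp only [map_add]
    rw [add_add_add_comm, hx, hy]
  | tmul x ω =>
    rw [map_tmul, ← sum_tmul_ite, koszulD_tmul, map_sum, homotopy_tmul, koszulD_tmul,
      ← Finset.sum_add_distrib]
    refine Finset.sum_congr rfl fun i _ => ?_
    rw [homotopy_tmul, contraction_wedgeBasis_succ, map_sub, add_sub_cancel]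

theorem map_mem_range_koszulDInto (j : Fin g) {z : KCochain M g k} (hz : koszulD g T k z = 0) :
    map (T j) z ∈ LinearMap.range (koszulDInto g T k) := by
  cases k with
  | zero =>
    rw [← homotopy_koszulD_zero, hz, map_zero]
    exact zero_mem _
  | succ k =>
    rw [← koszulD_homotopy_add_homotopy_koszulD, hz, map_zero, add_zero]
    exact LinearMap.mem_range_self _ _

end Differential

section Strand

/-- The degree `n` strand of the Koszul complex for a family `F` of subspaces indexed by degrees.
Here `dz_j` has degree `-e_j`, so that the differential preserves degrees if `T_j` raises them by
`e_j`. -/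
def strand (F : ℤ → Submodule ℂ M) (e : Fin g → ℤ) (k : ℕ) (n : ℤ) :
    Submodule ℂ (KCochain M g k) :=
  (Submodule.pi Set.univ fun s => F (n + basisDegree e s)).comap equivFun.toLinearMap

variable {F : ℤ → Submodule ℂ M} {e : Fin g → ℤ} {n : ℤ} {T : Fin g → Module.End ℂ M}

theorem mem_strand {z : KCochain M g k} :
    z ∈ strand F e k n ↔ ∀ s, coord s z ∈ F (n + basisDegree e s) := by
  simp only [strand, Submodule.mem_comap, Submodule.mem_pi, Set.mem_univ, true_imp_iff]
  rfl

theorem strand_mono (hF : Monotone F) : Monotone (strand F e k) := fun _ _ h _ hz =>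
  mem_strand.2 fun s => hF (by gcongr) (mem_strand.1 hz s)

theorem map_gradedMap_strand (F : ℤ → Submodule ℂ M) (π : ℤ → M →ₗ[ℂ] N) (e : Fin g → ℤ) (k : ℕ)
    (n : ℤ) :
    (strand F e k n).map (gradedMap π e n) = strand (fun m => (F m).map (π m)) e k n := by
  ext z
  constructor
  · rintro ⟨y, hy, rfl⟩
    exact mem_strand.2 fun s => ⟨coord s y, mem_strand.1 hy s, (coord_gradedMap π e n y s).symm⟩
  · intro hz
    choose y hy hyz using mem_strand.1 hz
    refine ⟨equivFun.symm y, mem_strand.2 fun s => ?_, coord_ext fun s => ?_⟩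
    · rw [coord_equivFun_symm]
      exact hy s
    · rw [coord_gradedMap, coord_equivFun_symm, hyz]

theorem map_map_strand (F : ℤ → Submodule ℂ M) (φ : M →ₗ[ℂ] N) (e : Fin g → ℤ) (k : ℕ) (n : ℤ) :
    (strand F e k n).map (map φ) = strand (fun m => (F m).map φ) e k n :=
  map_gradedMap_strand F (fun _ => φ) e k n

theorem koszulD_mem_strand (hT : ∀ j n, ∀ x ∈ F n, T j x ∈ F (n + e j)) {z : KCochain M g k}
    (hz : z ∈ strand F e k n) : koszulD g T k z ∈ strand F e (k + 1) n := by
  refine mem_strand.2 fun s => ?_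
  rw [coord_koszulD]
  refine sum_mem fun j _ => sum_mem fun s' _ => ?_
  by_cases hc : wedgeCoeff j s s' = 0
  · rw [hc, zero_smul]
    exact zero_mem _
  · refine Submodule.smul_mem _ _ ?_
    rw [basisDegree, sum_eq_add_sum_of_wedgeCoeff_ne_zero hc, add_comm (e j), ← add_assoc]
    exact hT j _ _ (mem_strand.1 hz s')

theorem koszulDInto_mem_strand (hT : ∀ j n, ∀ x ∈ F n, T j x ∈ F (n + e j))
    {z : KCochain M g (k - 1)} (hz : z ∈ strand F e (k - 1) n) :
    koszulDInto g T k z ∈ strand F e k n := by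
  cases k with
  | zero => exact zero_mem _
  | succ k => exact koszulD_mem_strand hT hz

theorem exists_mem_strand (hF : Monotone F) (hexh : ∀ x, ∃ n, x ∈ F n) (e : Fin g → ℤ)
    (z : KCochain M g k) : ∃ n, z ∈ strand F e k n := by
  choose d hd using fun s => hexh (coord s z)
  obtain ⟨n, hn⟩ := Finset.exists_le (Finset.univ.image fun s => d s - basisDegree e s)
  refine ⟨n, mem_strand.2 fun s => hF ?_ (hd s)⟩
  exact sub_le_iff_le_add.1 (hn _ (Finset.mem_image_of_mem _ (Finset.mem_univ s)))

theorem bijective_coord_strand (F : ℤ → Submodule ℂ M) (e : Fin g → ℤ) (k : ℕ) (n : ℤ) :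
    Function.Bijective (LinearMap.pi fun s => (coord s).restrict
      (p := strand F e k n) (q := F (n + basisDegree e s)) fun _ hz => mem_strand.1 hz s) := by
  refine ⟨fun z z' h => Subtype.ext (coord_ext fun s => ?_), fun x => ?_⟩
  · exact congrArg Subtype.val (congrFun h s)
  · refine ⟨⟨equivFun.symm fun s => x s, mem_strand.2 fun s => ?_⟩, funext fun s => ?_⟩
    · rw [coord_equivFun_symm]
      exact (x s).2
    · exact Subtype.ext (coord_equivFun_symm _ s)

/-- A strand as the product of the subspaces in which its coordinates lie. -/
def strandEquiv (F : ℤ → Submodule ℂ M) (e : Fin g → ℤ) (k : ℕ) (n : ℤ) :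
    strand F e k n ≃ₗ[ℂ] ∀ s : Set.powersetCard (Fin g) k, F (n + basisDegree e s) :=
  LinearEquiv.ofBijective _ (bijective_coord_strand F e k n)

theorem finiteDimensional_strand [∀ n, FiniteDimensional ℂ (F n)] (e : Fin g → ℤ) (k : ℕ)
    (n : ℤ) : FiniteDimensional ℂ (strand F e k n) :=
  (strandEquiv F e k n).symm.finiteDimensional

theorem finrank_strand [∀ n, FiniteDimensional ℂ (F n)] (e : Fin g → ℤ) (k : ℕ) (n : ℤ) :
    Module.finrank ℂ (strand F e k n) =
      ∑ s : Set.powersetCard (Fin g) k, Module.finrank ℂ (F (n + basisDegree e s)) := by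
  rw [(strandEquiv F e k n).finrank_eq, Module.finrank_pi_fintype]

end Strand
end KCochain

end Koszul

section CohomologyFinite

variable {g k : ℕ} {T : Fin g → Module.End ℂ M}

open scoped IsMulCommutative in
theorem isNoetherianRing_adjoin_range (hT : ∀ i j, Commute (T i) (T j)) :
    IsNoetherianRing (Algebra.adjoin ℂ (Set.range T)) := by
  have : IsMulCommutative (Algebra.adjoin ℂ (Set.range T)) :=
    Algebra.isMulCommutative_adjoin ℂ (by rintro _ ⟨i, rfl⟩ _ ⟨j, rfl⟩; exact hT i j)
  have : (Algebra.adjoin ℂ (Set.range T)).FG :=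
    Subalgebra.fg_def.2 ⟨_, Set.finite_range T, rfl⟩
  have := (Subalgebra.fg_iff_finiteType _).1 this
  exact Algebra.FiniteType.isNoetherianRing ℂ _

namespace KCochain

theorem map_koszulD_of_mem_adjoin (hT : ∀ i j, Commute (T i) (T j)) {p : Module.End ℂ M}
    (hp : p ∈ Algebra.adjoin ℂ (Set.range T)) (z : KCochain M g k) :
    map p (koszulD g T k z) = koszulD g T k (map p z) := by
  refine gradedMap_koszulD (e := 0) (π := fun _ => p) (fun j _ x => ?_) 0 z
  have : Commute p (T j) := (Algebra.commute_of_mem_adjoin_of_forall_mem_commute hp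
    (by rintro _ ⟨i, rfl⟩; exact hT j i)).symm
  exact LinearMap.congr_fun this.eq x

/-- The Koszul homotopy shows that each `T_j` acts by zero on cohomology. -/
theorem exists_map_sub_smul_mem_range (hT : ∀ i j, Commute (T i) (T j)) {p : Module.End ℂ M}
    (hp : p ∈ Algebra.adjoin ℂ (Set.range T)) :
    ∃ r : ℂ, ∀ z : KCochain M g k, koszulD g T k z = 0 →
      map p z - r • z ∈ LinearMap.range (koszulDInto g T k) := by
  induction hp using Algebra.adjoin_induction with
  | mem p hp =>
    obtain ⟨j, rfl⟩ := hp
    exact ⟨0, fun z hz => by simpa only [zero_smul, sub_zero] using map_mem_range_koszulDInto j hz⟩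
  | algebraMap r =>
    refine ⟨r, fun z _ => ?_⟩
    have : map (algebraMap ℂ (Module.End ℂ M) r) z = r • z :=
      coord_ext fun s => by rw [coord_gradedMap, Module.algebraMap_end_apply, map_smul]
    rw [this, sub_self]
    exact zero_mem _
  | add p q _ _ hp hq =>
    obtain ⟨r, hr⟩ := hp
    obtain ⟨r', hr'⟩ := hq
    refine ⟨r + r', fun z hz => ?_⟩
    have : map (p + q) z = map p z + map q z := coord_ext fun s => by simp
    rw [this, add_smul, add_sub_add_comm]
    exact add_mem (hr z hz) (hr' z hz)
  | mul p q _ hqT hp hq =>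
    obtain ⟨r, hr⟩ := hp
    obtain ⟨r', hr'⟩ := hq
    refine ⟨r * r', fun z hz => ?_⟩
    have : map (p * q) z = map p (map q z) := coord_ext fun s => by simp
    rw [this, mul_smul, ← sub_add_sub_cancel _ (r • map q z), ← smul_sub]
    refine add_mem (hr _ ?_) (Submodule.smul_mem _ r (hr' z hz))
    rw [← map_koszulD_of_mem_adjoin hT hqT, hz, map_zero]

theorem equivFun_symm_smul {S : Subalgebra ℂ (Module.End ℂ M)} (p : S)
    (x : Set.powersetCard (Fin g) k → M) : equivFun.symm (p • x) = map p.1 (equivFun.symm x) :=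
  coord_ext fun s => by
    rw [coord_gradedMap, coord_equivFun_symm, coord_equivFun_symm]
    rfl

/-- The cocycles, in coordinates, as a module over the algebra generated by the operators. -/
def cocycles (hT : ∀ i j, Commute (T i) (T j)) (k : ℕ) :
    Submodule (Algebra.adjoin ℂ (Set.range T)) (Set.powersetCard (Fin g) k → M) where
  carrier := {x | koszulD g T k (equivFun.symm x) = 0}
  add_mem' {x y} hx hy := by
    rw [Set.mem_ofPred_eq, map_add, map_add, hx, hy, add_zero]
  zero_mem' := by rw [Set.mem_ofPred_eq, map_zero, map_zero]
  smul_mem' p x hx := by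
    rw [Set.mem_ofPred_eq, equivFun_symm_smul, ← map_koszulD_of_mem_adjoin hT p.2, hx, map_zero]

theorem exists_fg_ker_koszulD_le [Module.Finite (Algebra.adjoin ℂ (Set.range T)) M]
    (hT : ∀ i j, Commute (T i) (T j)) (k : ℕ) :
    ∃ G : Submodule ℂ (KCochain M g k), G.FG ∧
      LinearMap.ker (koszulD g T k) ≤ G ⊔ LinearMap.range (koszulDInto g T k) := by
  have := isNoetherianRing_adjoin_range hT
  have : IsNoetherian (Algebra.adjoin ℂ (Set.range T)) M :=
    isNoetherian_of_isNoetherianRing_of_finite _ M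
  obtain ⟨t, ht⟩ := IsNoetherian.noetherian (cocycles hT k)
  refine ⟨Submodule.span ℂ (equivFun.symm '' t),
    Submodule.fg_span (t.finite_toSet.image _), fun z hz => ?_⟩
  obtain ⟨x, rfl⟩ := equivFun.symm.surjective z
  replace hz : x ∈ cocycles hT k := hz
  rw [← ht] at hz
  induction hz using Submodule.span_induction with
  | mem x hx => exact Submodule.mem_sup_left (Submodule.subset_span (Set.mem_image_of_mem _ hx))
  | zero => rw [map_zero]; exact zero_mem _
  | add x y _ _ hx hy => rw [map_add]; exact add_mem hx hy
  | smul p x hxt hx =>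
    obtain ⟨r, hr⟩ := exists_map_sub_smul_mem_range (k := k) hT p.2
    rw [equivFun_symm_smul, ← sub_add_cancel (map p.1 _) (r • equivFun.symm x)]
    rw [ht] at hxt
    exact add_mem (Submodule.mem_sup_right (hr _ hxt)) (Submodule.smul_mem _ r hx)

end KCochain

end CohomologyFinite

section GradedModule

open DirectSum

variable {K V : Type*} [CommRing K] [AddCommGroup V] [Module K V]

theorem exists_finite_span_sup_eq_top (W : Submodule K V) [hfin : Module.Finite K (V ⧸ W)] :
    ∃ t : Set V, t.Finite ∧ Submodule.span K t ⊔ W = ⊤ := by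
  obtain ⟨s, hs, hspan⟩ := Submodule.fg_def.1 hfin.fg_top
  refine ⟨Quotient.out '' s, hs.image _, ?_⟩
  have mkQ_image : W.mkQ '' (Quotient.out '' s) = s := by
    simp only [Set.image_image, Submodule.mkQ_apply, ← Submodule.Quotient.mk''_eq_mk,
      Quotient.out_eq', Set.image_id']
  rw [sup_comm, ← Submodule.comap_map_mkQ, Submodule.map_span, mkQ_image, hspan,
    Submodule.comap_top]

variable (𝒱 : ℤ → Submodule K V) [Decomposition 𝒱]

/-- The projection of a graded module onto its degree `n` piece. -/
def gradeProj (n : ℤ) : V →ₗ[K] V :=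
  (𝒱 n).subtype ∘ₗ DirectSum.component K ℤ _ n ∘ₗ (decomposeLinearEquiv 𝒱).toLinearMap

variable {𝒱}

theorem gradeProj_mem (n : ℤ) (x : V) : gradeProj 𝒱 n x ∈ 𝒱 n := (decompose 𝒱 x n).2

theorem gradeProj_of_mem {n : ℤ} {x : V} (hx : x ∈ 𝒱 n) : gradeProj 𝒱 n x = x :=
  decompose_of_mem_same 𝒱 hx

theorem gradeProj_of_mem_of_ne {n k : ℤ} {x : V} (hx : x ∈ 𝒱 k) (hkn : k ≠ n) :
    gradeProj 𝒱 n x = 0 :=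
  decompose_of_mem_ne 𝒱 hx hkn

variable (𝒱) in
theorem finite_gradeProj_ne_zero (x : V) : {n | gradeProj 𝒱 n x ≠ 0}.Finite := by
  classical
  refine (decompose 𝒱 x).support.finite_toSet.subset fun n hn => DFinsupp.mem_support_iff.2 ?_
  exact fun h => hn (congrArg Subtype.val h)

variable (𝒱) in
theorem exists_forall_gradeProj_eq_zero (x : V) : ∃ N, ∀ n > N, gradeProj 𝒱 n x = 0 := by
  obtain ⟨N, hN⟩ := (finite_gradeProj_ne_zero 𝒱 x).bddAbove
  exact ⟨N, fun n hn => by_contra fun h => hn.not_ge (hN h)⟩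

variable (𝒱) in
theorem finite_range_gradeProj (x : V) : (Set.range fun n => gradeProj 𝒱 n x).Finite := by
  refine (((finite_gradeProj_ne_zero 𝒱 x).image fun n => gradeProj 𝒱 n x).insert 0).subset ?_
  rintro _ ⟨n, rfl⟩
  by_cases hn : gradeProj 𝒱 n x = 0
  · exact Or.inl hn
  · exact Or.inr ⟨n, hn, rfl⟩

theorem gradeProj_apply_of_homogeneous {T : Module.End K V} {d : ℤ}
    (hT : ∀ n, ∀ x ∈ 𝒱 n, T x ∈ 𝒱 (n + d)) (n : ℤ) (x : V) :
    gradeProj 𝒱 (n + d) (T x) = T (gradeProj 𝒱 n x) := by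
  induction x using Decomposition.inductionOn 𝒱 with
  | zero => simp only [map_zero]
  | add x y hx hy => simp only [map_add, hx, hy]
  | @homogeneous k x =>
    obtain rfl | hkn := eq_or_ne k n
    · rw [gradeProj_of_mem x.2, gradeProj_of_mem (hT k x x.2)]
    · rw [gradeProj_of_mem_of_ne x.2 hkn, map_zero,
        gradeProj_of_mem_of_ne (hT k x x.2) (by simpa using hkn)]

/-- The graded Nakayama lemma: by induction on the degree, the homogeneous components of lifts of
generators of the quotient generate the whole module. -/
theorem finite_adjoin_range_of_finite_quotient {ι : Type*} {T : ι → Module.End K V} {e : ι → ℤ}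
    (he : ∀ j, 0 < e j) (h𝒱 : ∀ n < 0, 𝒱 n = ⊥) (hT : ∀ j n, ∀ x ∈ 𝒱 n, T j x ∈ 𝒱 (n + e j))
    [Module.Finite K (V ⧸ ⨆ j, LinearMap.range (T j))] :
    Module.Finite (Algebra.adjoin K (Set.range T)) V := by
  obtain ⟨t, ht, hspan⟩ := exists_finite_span_sup_eq_top (⨆ j, LinearMap.range (T j))
  let B : Set V := ⋃ y ∈ t, Set.range fun n => gradeProj 𝒱 n y
  let P := Submodule.span (Algebra.adjoin K (Set.range T)) B
  have mem_of_lt : ∀ m : ℕ, ∀ n < (m : ℤ), 𝒱 n ≤ P.restrictScalars K := by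
    intro m
    induction m with
    | zero => exact fun n hn => h𝒱 n hn ▸ bot_le
    | succ m ih =>
      intro n hn x hx
      have lifts_le : Submodule.span K t ≤ (P.restrictScalars K).comap (gradeProj 𝒱 n) :=
        Submodule.span_le.2 fun y hy =>
          Submodule.subset_span (Set.mem_biUnion hy (Set.mem_range_self n))
      have range_le : ⨆ j, LinearMap.range (T j) ≤ (P.restrictScalars K).comap (gradeProj 𝒱 n) := by
        refine iSup_le fun j => ?_
        rintro _ ⟨x, rfl⟩
        have hx := ih (n - e j) (by have := he j; omega) (gradeProj_mem (n - e j) x)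
        rw [Submodule.mem_comap, ← sub_add_cancel n (e j), gradeProj_apply_of_homogeneous (hT j)]
        exact P.smul_mem ⟨T j, Algebra.subset_adjoin (Set.mem_range_self j)⟩ hx
      rw [← gradeProj_of_mem hx]
      exact sup_le lifts_le range_le (hspan ▸ Submodule.mem_top)
  refine ⟨Submodule.fg_def.2 ⟨B, ht.biUnion fun y _ => finite_range_gradeProj 𝒱 y, ?_⟩⟩
  refine Submodule.eq_top_iff'.2 fun x => ?_
  induction x using Decomposition.inductionOn 𝒱 with
  | zero => exact zero_mem _
  | add x y hx hy => exact add_mem hx hy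
  | @homogeneous k x => exact mem_of_lt (k.toNat + 1) k (by omega) x.2

end GradedModule

section StrandExact

open DirectSum

namespace KCochain

variable {g : ℕ} {T : Fin g → Module.End ℂ M} (ℳ : ℤ → Submodule ℂ M) [Decomposition ℳ]

theorem gradedMap_gradeProj_of_mem {e : Fin g → ℤ} {k : ℕ} {n : ℤ} {z : KCochain M g k}
    (hz : z ∈ strand ℳ e k n) : gradedMap (gradeProj ℳ) e n z = z :=
  coord_ext fun s => by rw [coord_gradedMap, gradeProj_of_mem (mem_strand.1 hz s)]

theorem gradedMap_gradeProj_mem {e : Fin g → ℤ} {k : ℕ} {n : ℤ} {z : KCochain M g k} :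
    gradedMap (gradeProj ℳ) e n z ∈ strand ℳ e k n :=
  mem_strand.2 fun s => by
    rw [coord_gradedMap]
    exact gradeProj_mem _ _

theorem exists_forall_gradedMap_gradeProj_eq_zero (e : Fin g → ℤ) {k : ℕ} (z : KCochain M g k) :
    ∃ N, ∀ n > N, gradedMap (gradeProj ℳ) e n z = 0 := by
  choose d hd using fun s => exists_forall_gradeProj_eq_zero ℳ (coord s z)
  obtain ⟨N, hN⟩ := Finset.exists_le (Finset.univ.image fun s => d s - basisDegree e s)
  refine ⟨N, fun n hn => coord_ext fun s => ?_⟩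
  have := hN _ (Finset.mem_image_of_mem _ (Finset.mem_univ s))
  rw [coord_gradedMap, map_zero, hd s _ (by omega)]

theorem exists_forall_mem_gradedMap_gradeProj_eq_zero (e : Fin g → ℤ) {k : ℕ}
    {G : Submodule ℂ (KCochain M g k)} (hG : G.FG) :
    ∃ N, ∀ n > N, ∀ z ∈ G, gradedMap (gradeProj ℳ) e n z = 0 := by
  obtain ⟨t, rfl⟩ := hG
  choose d hd using exists_forall_gradedMap_gradeProj_eq_zero (k := k) ℳ e
  obtain ⟨N, hN⟩ := Finset.exists_le (t.image d)
  refine ⟨N, fun n hn z hz => ?_⟩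
  refine Submodule.span_le (p := LinearMap.ker (gradedMap (gradeProj ℳ) e n)).2 (fun y hy => ?_) hz
  exact hd y n ((hN _ (Finset.mem_image_of_mem d hy)).trans_lt hn)

variable {ℳ}

theorem exists_forall_strand_exact {e : Fin g → ℤ} (he : ∀ j, 0 < e j) (hℳ : ∀ n < 0, ℳ n = ⊥)
    (hcomm : ∀ i j, Commute (T i) (T j)) (hT : ∀ j n, ∀ x ∈ ℳ n, T j x ∈ ℳ (n + e j))
    [Module.Finite ℂ (M ⧸ ⨆ j, LinearMap.range (T j))] (k : ℕ) :
    ∃ N, ∀ n > N, ∀ z ∈ strand ℳ e k n, koszulD g T k z = 0 →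
      ∃ y ∈ strand ℳ e (k - 1) n, koszulDInto g T k y = z := by
  have := finite_adjoin_range_of_finite_quotient he hℳ hT
  obtain ⟨G, hG, ker_le⟩ := exists_fg_ker_koszulD_le hcomm k
  obtain ⟨N, hN⟩ := exists_forall_mem_gradedMap_gradeProj_eq_zero ℳ e hG
  refine ⟨N, fun n hn z hz hdz => ?_⟩
  obtain ⟨x, hx, _, ⟨y, rfl⟩, rfl⟩ := Submodule.mem_sup.1 (ker_le hdz)
  refine ⟨gradedMap (gradeProj ℳ) e n y, gradedMap_gradeProj_mem ℳ, ?_⟩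
  rw [← gradedMap_gradeProj_of_mem ℳ hz, map_add, hN n hn x hx, zero_add]
  exact (gradedMap_koszulDInto
    (fun j m x => gradeProj_apply_of_homogeneous (hT j) m x) n y).symm

end KCochain

end StrandExact

section QuotientGrading

open DirectSum

variable {K A : Type*} [Field K] [CommRing A] [Algebra K A]
variable {𝒜 : ℤ → Submodule K A} [GradedAlgebra 𝒜]

theorem isInternal_quotientGrade {I : Ideal A} (hI : I.IsHomogeneous 𝒜) :
    DirectSum.IsInternal (quotientGrade 𝒜 I) := by
  let φ (n : ℤ) : 𝒜 n →ₗ[K] quotientGrade 𝒜 I n :=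
    (Ideal.Quotient.mkₐ K I).toLinearMap.submoduleMap (𝒜 n)
  have hφ : Function.Surjective (lmap φ) :=
    (DirectSum.lmap_surjective φ).2 fun n => LinearMap.submoduleMap_surjective _ _
  have coe_lmap (a : ⨁ n, 𝒜 n) : DirectSum.coeAddMonoidHom (quotientGrade 𝒜 I) (lmap φ a) =
      Ideal.Quotient.mk I ((decompose 𝒜).symm a) := by
    induction a using DirectSum.induction_on with
    | zero => rw [map_zero, map_zero, decompose_symm_zero, map_zero]
    | of n a =>
      rw [lmap_of, DirectSum.coeAddMonoidHom_of, decompose_symm_of]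
      rfl
    | add a b ha hb => rw [map_add, map_add, ha, hb, decompose_symm_add 𝒜, map_add]
  refine ⟨(injective_iff_map_eq_zero _).2 fun x hx => ?_, fun x => ?_⟩
  · obtain ⟨a, rfl⟩ := hφ x
    rw [coe_lmap, Ideal.Quotient.eq_zero_iff_mem] at hx
    refine DFinsupp.ext fun n => Subtype.ext (Ideal.Quotient.eq_zero_iff_mem.2 ?_)
    simpa using hI n hx
  · obtain ⟨a, rfl⟩ := Ideal.Quotient.mk_surjective x
    exact ⟨lmap φ (decompose 𝒜 a), by rw [coe_lmap, Equiv.symm_apply_apply]⟩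

end QuotientGrading

section FilteredComparison

namespace KCochain

variable {L N : Type} [AddCommGroup L] [Module ℂ L] [AddCommGroup N] [Module ℂ N] {g k : ℕ}
variable {F : ℤ → Submodule ℂ L} {e : Fin g → ℤ} {n : ℤ}

theorem gradedMap_eq_zero_iff {μ : L →ₗ[ℂ] M} {q : ℤ → L →ₗ[ℂ] N}
    (hsymb : ∀ n, ∀ x ∈ F n, q n x = 0 ↔ μ x ∈ (F (n - 1)).map μ) {z : KCochain L g k}
    (hz : z ∈ strand F e k n) :
    gradedMap q e n z = 0 ↔ map μ z ∈ strand (fun m => (F m).map μ) e k (n - 1) := by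
  have coord_iff (s) : coord s (gradedMap q e n z) = 0 ↔
      coord s (map μ z) ∈ (F (n - 1 + basisDegree e s)).map μ := by
    rw [coord_gradedMap, coord_gradedMap, hsymb _ _ (mem_strand.1 hz s), sub_add_eq_add_sub]
  rw [mem_strand]
  refine ⟨fun h s => (coord_iff s).1 (by rw [h, map_zero]), fun h => coord_ext fun s => ?_⟩
  rw [(coord_iff s).2 (h s), map_zero]

/-- A cochain is corrected by lifting to `L` a preimage of its symbol, which is a cocycle because
the differential lowers the filtration degree. -/
theorem exists_sub_koszulDInto_mem_strand_sub_one {D : Fin g → Module.End ℂ L}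
    {T : Fin g → Module.End ℂ M} {T' : Fin g → Module.End ℂ N}
    {μ : L →ₗ[ℂ] M} {q : ℤ → L →ₗ[ℂ] N} (hF : ∀ j n, ∀ x ∈ F n, D j x ∈ F (n + e j))
    (hμ : ∀ j x, μ (D j x) = T j (μ x)) (hq : ∀ j n x, q (n + e j) (D j x) = T' j (q n x))
    (hsymb : ∀ n, ∀ x ∈ F n, q n x = 0 ↔ μ x ∈ (F (n - 1)).map μ)
    (hexact : ∀ z ∈ strand (fun m => (F m).map (q m)) e k n, koszulD g T' k z = 0 →
      ∃ y ∈ strand (fun m => (F m).map (q m)) e (k - 1) n, koszulDInto g T' k y = z)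
    {z : KCochain M g k} (hz : z ∈ strand (fun m => (F m).map μ) e k n)
    (hdz : koszulD g T k z ∈ strand (fun m => (F m).map μ) e (k + 1) (n - 1)) :
    ∃ y, z - koszulDInto g T k y ∈ strand (fun m => (F m).map μ) e k (n - 1) := by
  rw [← map_map_strand] at hz
  obtain ⟨z, hz, rfl⟩ := hz
  have map_d (x : KCochain L g k) : map μ (koszulD g D k x) = koszulD g T k (map μ x) :=
    gradedMap_koszulD (fun j _ x => hμ j x) 0 x
  have map_dInto (x : KCochain L g (k - 1)) :
      map μ (koszulDInto g D k x) = koszulDInto g T k (map μ x) :=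
    gradedMap_koszulDInto (fun j _ x => hμ j x) 0 x
  have symbol_closed : koszulD g T' k (gradedMap q e n z) = 0 := by
    rw [← gradedMap_koszulD hq, gradedMap_eq_zero_iff hsymb (koszulD_mem_strand hF hz), map_d]
    exact hdz
  obtain ⟨_, hy, hyz⟩ := hexact _
    (map_gradedMap_strand F q e k n ▸ Submodule.mem_map_of_mem hz) symbol_closed
  rw [← map_gradedMap_strand] at hy
  obtain ⟨y, hy, rfl⟩ := hy
  refine ⟨map μ y, ?_⟩
  rw [← map_dInto, ← map_sub, ← gradedMap_eq_zero_iff hsymb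
    (sub_mem hz (koszulDInto_mem_strand hF hy)), map_sub, gradedMap_koszulDInto hq, hyz, sub_self]

/-- The conclusion says that the strand of degree `N` is a subcomplex with the same cohomology. -/
theorem exists_sub_koszulDInto_mem_strand {T : Fin g → Module.End ℂ M}
    (hT : ∀ i j, Commute (T i) (T j)) {P : ℤ → Submodule ℂ M} (hP : Monotone P)
    (hexh : ∀ x, ∃ n, x ∈ P n) {N : ℤ}
    (hstep : ∀ n > N, ∀ z ∈ strand P e k n, koszulD g T k z ∈ strand P e (k + 1) (n - 1) →
      ∃ y, z - koszulDInto g T k y ∈ strand P e k (n - 1))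
    {z : KCochain M g k} (hdz : koszulD g T k z ∈ strand P e (k + 1) N) :
    ∃ y, z - koszulDInto g T k y ∈ strand P e k N := by
  have descend : ∀ n ≥ N, ∀ z ∈ strand P e k n, koszulD g T k z ∈ strand P e (k + 1) N →
      ∃ y, z - koszulDInto g T k y ∈ strand P e k N := by
    refine fun n hn => Int.leInduction (fun z hz _ => ⟨0, by simpa using hz⟩)
      (fun n hn ih z hz hdz => ?_) n hn
    obtain ⟨y, hy⟩ := hstep (n + 1) (by omega) z hz
      (strand_mono hP (by omega) hdz)
    rw [add_sub_cancel_right] at hy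
    obtain ⟨y', hy'⟩ := ih _ hy (by rwa [map_sub, koszulD_koszulDInto hT, sub_zero])
    exact ⟨y + y', by rwa [map_add, ← sub_sub]⟩
  obtain ⟨n, hn⟩ := exists_mem_strand hP hexh e z
  exact descend (max n N) (le_max_right _ _) z (strand_mono hP (le_max_left _ _) hn) hdz

end KCochain

end FilteredComparison

section EulerCharacteristic

section Subquotient

variable {K V : Type*} [Field K] [AddCommGroup V] [Module K V] {p p' q : Submodule K V}

theorem finiteDimensional_quotient_of_sup_eq [FiniteDimensional K p] (h : p ⊔ p' = q) :
    FiniteDimensional K (q ⧸ p'.comap q.subtype) := by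
  subst h
  exact (LinearMap.quotientInfEquivSupQuotient p p').finiteDimensional

theorem finrank_quotient_add_finrank_inf_of_sup_eq [FiniteDimensional K p] (h : p ⊔ p' = q) :
    Module.finrank K (q ⧸ p'.comap q.subtype) + Module.finrank K ↥(p ⊓ p') =
      Module.finrank K p := by
  have finrank_comap : Module.finrank K ((p ⊓ p').comap p.subtype) = Module.finrank K ↥(p ⊓ p') :=
    (Submodule.comapSubtypeEquivOfLe inf_le_left).finrank_eq
  subst h
  rw [← (LinearMap.quotientInfEquivSupQuotient p p').finrank_eq, ← finrank_comap,
    Submodule.comap_inf, Submodule.finrank_quotient_add_finrank]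

end Subquotient

variable {g : ℕ} {T : Fin g → Module.End ℂ M}

namespace KoszulH

variable {V : ∀ k, Submodule ℂ (KCochain M g k)}

theorem inf_ker_sup_range_eq (hT : ∀ i j, Commute (T i) (T j)) {k : ℕ}
    (hred : ∀ z, koszulD g T k z ∈ V (k + 1) → ∃ y, z - koszulDInto g T k y ∈ V k) :
    V k ⊓ LinearMap.ker (koszulD g T k) ⊔ LinearMap.range (koszulDInto g T k) =
      LinearMap.ker (koszulD g T k) := by
  refine le_antisymm (sup_le inf_le_right ?_) fun z hz => ?_
  · rintro _ ⟨y, rfl⟩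
    exact KCochain.koszulD_koszulDInto hT y
  · obtain ⟨y, hy⟩ := hred z (LinearMap.mem_ker.1 hz ▸ zero_mem _)
    rw [← sub_add_cancel z (koszulDInto g T k y)]
    refine Submodule.add_mem_sup ⟨hy, ?_⟩ (LinearMap.mem_range_self _ _)
    exact sub_mem hz (KCochain.koszulD_koszulDInto hT y)

theorem inf_ker_inf_range_eq (hT : ∀ i j, Commute (T i) (T j))
    (hd : ∀ k, ∀ z ∈ V k, koszulD g T k z ∈ V (k + 1))
    (hred : ∀ k z, koszulD g T k z ∈ V (k + 1) → ∃ y, z - koszulDInto g T k y ∈ V k) (k : ℕ) :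
    V k ⊓ LinearMap.ker (koszulD g T k) ⊓ LinearMap.range (koszulDInto g T k) =
      (V (k - 1)).map (koszulDInto g T k) := by
  refine le_antisymm ?_ ?_
  · rintro _ ⟨⟨hz, -⟩, y, rfl⟩
    cases k with
    | zero => exact ⟨0, zero_mem _, rfl⟩
    | succ k =>
      obtain ⟨u, hu⟩ := hred k y hz
      refine ⟨_, hu, ?_⟩
      rw [map_sub, sub_eq_self]
      exact KCochain.koszulD_koszulDInto hT u
  · rintro _ ⟨y, hy, rfl⟩
    refine ⟨⟨?_, KCochain.koszulD_koszulDInto hT y⟩, LinearMap.mem_range_self _ _⟩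
    cases k with
    | zero => exact zero_mem _
    | succ k => exact hd k y hy

variable [∀ k, FiniteDimensional ℂ (V k)]

theorem finiteDimensional (hT : ∀ i j, Commute (T i) (T j)) {k : ℕ}
    (hred : ∀ z, koszulD g T k z ∈ V (k + 1) → ∃ y, z - koszulDInto g T k y ∈ V k) :
    FiniteDimensional ℂ (KoszulH g T k) :=
  finiteDimensional_quotient_of_sup_eq (inf_ker_sup_range_eq hT hred)

theorem finrank_add (hT : ∀ i j, Commute (T i) (T j))
    (hd : ∀ k, ∀ z ∈ V k, koszulD g T k z ∈ V (k + 1))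
    (hred : ∀ k z, koszulD g T k z ∈ V (k + 1) → ∃ y, z - koszulDInto g T k y ∈ V k) (k : ℕ) :
    Module.finrank ℂ (KoszulH g T k) + Module.finrank ℂ ((V (k - 1)).map (koszulDInto g T k)) +
      Module.finrank ℂ ((V k).map (koszulD g T k)) = Module.finrank ℂ (V k) := by
  rw [← finrank_map_add_finrank_inf_ker (koszulD g T k) (V k),
    ← finrank_quotient_add_finrank_inf_of_sup_eq (inf_ker_sup_range_eq hT (hred k)),
    inf_ker_inf_range_eq hT hd hred k, add_comm]
  rfl

theorem sum_neg_one_pow_mul_finrank (hT : ∀ i j, Commute (T i) (T j))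
    (hd : ∀ k, ∀ z ∈ V k, koszulD g T k z ∈ V (k + 1))
    (hred : ∀ k z, koszulD g T k z ∈ V (k + 1) → ∃ y, z - koszulDInto g T k y ∈ V k) :
    ∑ k ∈ Finset.range (g + 1), (-1 : ℚ) ^ k * Module.finrank ℂ (KoszulH g T k) =
      ∑ k ∈ Finset.range (g + 1), (-1 : ℚ) ^ k * Module.finrank ℂ (V k) := by
  have partial_sum (n : ℕ) :
      ∑ k ∈ Finset.range (n + 1), (-1 : ℚ) ^ k * Module.finrank ℂ (KoszulH g T k) +
        (-1) ^ n * Module.finrank ℂ ((V n).map (koszulD g T n)) =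
      ∑ k ∈ Finset.range (n + 1), (-1 : ℚ) ^ k * Module.finrank ℂ (V k) := by
    induction n with
    | zero =>
      have into_eq_bot : (V (0 - 1)).map (koszulDInto g T 0) = ⊥ := Submodule.map_zero _
      rw [Finset.sum_range_succ, Finset.sum_range_zero, Finset.sum_range_succ,
        Finset.sum_range_zero, ← finrank_add hT hd hred 0, into_eq_bot, finrank_bot]
      push_cast
      ring
    | succ n ih =>
      have into_eq : (V (n + 1 - 1)).map (koszulDInto g T (n + 1)) = (V n).map (koszulD g T n) :=
        rfl
      rw [Finset.sum_range_succ, Finset.sum_range_succ _ (n + 1), ← ih,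
        ← finrank_add hT hd hred (n + 1), into_eq]
      push_cast
      ring
  have last_eq_bot : (V g).map (koszulD g T g) = ⊥ := (Submodule.eq_bot_iff _).2 fun z _ =>
    KCochain.eq_zero_of_lt (Nat.lt_succ_self g) z
  rw [← partial_sum g, last_eq_bot, finrank_bot, Nat.cast_zero, mul_zero, add_zero]

end KoszulH

theorem sum_neg_one_pow_mul_finrank_strand {P : ℤ → Submodule ℂ M}
    [∀ n, FiniteDimensional ℂ (P n)] (e : Fin g → ℤ) (n : ℤ) :
    ∑ k ∈ Finset.range (g + 1), (-1 : ℚ) ^ k * Module.finrank ℂ (KCochain.strand P e k n) =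
      ∑ s : Finset (Fin g), (-1 : ℚ) ^ s.card * Module.finrank ℂ (P (n + ∑ j ∈ s, e j)) := by
  rw [← Finset.powerset_univ, Finset.sum_powerset, Finset.card_univ, Fintype.card_fin]
  refine Finset.sum_congr rfl fun k _ => ?_
  rw [KCochain.finrank_strand, Nat.cast_sum, Finset.mul_sum]
  rw [Finset.sum_subtype (p := fun s => s ∈ Set.powersetCard (Fin g) k) _ (fun s => by simp)]
  exact Finset.sum_congr rfl fun s _ => by rw [s.2]; rfl

end EulerCharacteristic

section LeadingIdealComparison

open GradedAlgebra

section Field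

variable {K A : Type*} [Field K] [CommRing A] [Algebra K A] {𝒜 : ℤ → Submodule K A}
variable {I J : Ideal A}

theorem commute_of_mk {ι : Type*} {D : ι → Module.End K A} {T : ι → Module.End K (A ⧸ I)}
    (hDcomm : ∀ i j, Commute (D i) (D j))
    (hT : ∀ j x, T j (Ideal.Quotient.mk I x) = Ideal.Quotient.mk I (D j x)) (i j) :
    Commute (T i) (T j) := by
  refine LinearMap.ext fun x => ?_
  obtain ⟨x, rfl⟩ := Ideal.Quotient.mk_surjective x
  rw [Module.End.mul_apply, Module.End.mul_apply, hT, hT, hT, hT]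
  exact congrArg _ (LinearMap.congr_fun (hDcomm i j) x)

variable [GradedAlgebra 𝒜]

theorem proj_apply_of_homogeneous {D : Module.End K A} {e : ℤ}
    (hD : ∀ n, ∀ x ∈ 𝒜 n, D x ∈ 𝒜 (n + e)) (n : ℤ) (x : A) :
    proj 𝒜 (n + e) (D x) = D (proj 𝒜 n x) :=
  gradeProj_apply_of_homogeneous hD n x

theorem apply_mem_degreeLE {D : Module.End K A} {e : ℤ} (hD : ∀ n, ∀ x ∈ 𝒜 n, D x ∈ 𝒜 (n + e))
    (n : ℤ) (x : A) (hx : x ∈ degreeLE 𝒜 n) : D x ∈ degreeLE 𝒜 (n + e) := by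
  refine mem_degreeLE.2 fun k hk => ?_
  rw [← sub_add_cancel k e, proj_apply_of_homogeneous hD, mem_degreeLE.1 hx _ (by omega),
    map_zero]

theorem IsLeadingIdeal.mk_proj_eq_zero_iff (h : IsLeadingIdeal 𝒜 I J) (n : ℤ) (x : A)
    (hx : x ∈ degreeLE 𝒜 n) :
    Ideal.Quotient.mk I (proj 𝒜 n x) = 0 ↔
      Ideal.Quotient.mk J x ∈ quotientDegreeLE 𝒜 J (n - 1) := by
  have degreeLE_sub_one_le : degreeLE 𝒜 (n - 1) ≤ degreeLE 𝒜 n := degreeLE_mono (by omega)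
  have mem_sup_iff : Ideal.Quotient.mk I (proj 𝒜 n x) = 0 ↔
      x ∈ degreeLE 𝒜 (n - 1) ⊔ degreeLE 𝒜 n ⊓ J.restrictScalars K := by
    rw [← h.degreeLE_inf_ker_mkₐ_comp_proj]
    exact (and_iff_right hx).symm
  rw [mem_sup_iff]
  constructor
  · intro hx'
    obtain ⟨y, hy, z, hz, rfl⟩ := Submodule.mem_sup.1 hx'
    rw [map_add, Ideal.Quotient.eq_zero_iff_mem.2 hz.2, add_zero]
    exact Submodule.mem_map_of_mem hy
  · rintro ⟨y, hy, hyx⟩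
    rw [← add_sub_cancel y x]
    refine Submodule.add_mem_sup hy ⟨sub_mem hx (degreeLE_sub_one_le hy), ?_⟩
    exact Ideal.Quotient.eq.1 hyx.symm

end Field

variable {A : Type} [CommRing A] [Algebra ℂ A] {𝒜 : ℤ → Submodule ℂ A} [GradedAlgebra 𝒜]
variable {I J : Ideal A} {g : ℕ} {D : Fin g → Module.End ℂ A} {e : Fin g → ℤ}
variable {T : Fin g → Module.End ℂ (A ⧸ I)} {T' : Fin g → Module.End ℂ (A ⧸ J)}

theorem exists_forall_quotientGrade_strand_exact (h𝒜 : ∀ n < 0, 𝒜 n = ⊥) (hI : I.IsHomogeneous 𝒜)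
    (he : ∀ j, 0 < e j) (hD : ∀ j n, ∀ x ∈ 𝒜 n, D j x ∈ 𝒜 (n + e j))
    (hDcomm : ∀ i j, Commute (D i) (D j))
    (hT : ∀ j x, T j (Ideal.Quotient.mk I x) = Ideal.Quotient.mk I (D j x))
    [Module.Finite ℂ ((A ⧸ I) ⧸ ⨆ j, LinearMap.range (T j))] :
    ∃ N, ∀ k ≤ g, ∀ n > N, ∀ z ∈ KCochain.strand (quotientGrade 𝒜 I) e k n,
      koszulD g T k z = 0 →
        ∃ y ∈ KCochain.strand (quotientGrade 𝒜 I) e (k - 1) n, koszulDInto g T k y = z := by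
  let _ := (isInternal_quotientGrade hI).chooseDecomposition
  have hneg (n) (hn : n < 0) : quotientGrade 𝒜 I n = ⊥ := by
    rw [quotientGrade, h𝒜 n hn, Submodule.map_bot]
  have hTdeg (j n) : ∀ x ∈ quotientGrade 𝒜 I n, T j x ∈ quotientGrade 𝒜 I (n + e j) := by
    rintro _ ⟨x, hx, rfl⟩
    exact ⟨D j x, hD j n x hx, (hT j x).symm⟩
  choose N hN using KCochain.exists_forall_strand_exact he hneg (commute_of_mk hDcomm hT) hTdeg
  obtain ⟨N', hN'⟩ := Finset.exists_le ((Finset.range (g + 1)).image N)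
  refine ⟨N', fun k hk n hn => hN k n (lt_of_le_of_lt ?_ hn)⟩
  exact hN' _ (Finset.mem_image_of_mem N (Finset.mem_range_succ_iff.2 hk))

/-- In degrees above `N` the symbol complex `A ⧸ I` is exact, so every class of the complex of
`A ⧸ J` can be pushed down to filtration degree `N`. -/
theorem IsLeadingIdeal.exists_forall_exists_sub_mem_strand (h𝒜 : ∀ n < 0, 𝒜 n = ⊥)
    (hI : I.IsHomogeneous 𝒜) (h : IsLeadingIdeal 𝒜 I J)
    (he : ∀ j, 0 < e j) (hD : ∀ j n, ∀ x ∈ 𝒜 n, D j x ∈ 𝒜 (n + e j))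
    (hDcomm : ∀ i j, Commute (D i) (D j))
    (hT : ∀ j x, T j (Ideal.Quotient.mk I x) = Ideal.Quotient.mk I (D j x))
    [Module.Finite ℂ ((A ⧸ I) ⧸ ⨆ j, LinearMap.range (T j))]
    (hT' : ∀ j x, T' j (Ideal.Quotient.mk J x) = Ideal.Quotient.mk J (D j x)) :
    ∃ N, ∀ n ≥ N, ∀ k z,
      koszulD g T' k z ∈ KCochain.strand (quotientDegreeLE 𝒜 J) e (k + 1) n →
        ∃ y, z - koszulDInto g T' k y ∈ KCochain.strand (quotientDegreeLE 𝒜 J) e k n := by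
  obtain ⟨N, hN⟩ := exists_forall_quotientGrade_strand_exact h𝒜 hI he hD hDcomm hT
  have map_symbol : (fun m => (degreeLE 𝒜 m).map
      ((Ideal.Quotient.mkₐ ℂ I).toLinearMap ∘ₗ proj 𝒜 m)) = quotientGrade 𝒜 I :=
    funext fun m => by rw [Submodule.map_comp, map_proj_degreeLE, quotientGrade]
  have exhaustive (x : A ⧸ J) : ∃ n, x ∈ quotientDegreeLE 𝒜 J n := by
    obtain ⟨x, rfl⟩ := Ideal.Quotient.mk_surjective x
    obtain ⟨n, hn⟩ := exists_mem_degreeLE (𝒜 := 𝒜) x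
    exact ⟨n, x, hn, rfl⟩
  refine ⟨N, fun n hn k z hdz => ?_⟩
  obtain hk | hk := lt_or_ge g k
  · exact ⟨0, by rw [KCochain.eq_zero_of_lt hk (z - _)]; exact zero_mem _⟩
  refine KCochain.exists_sub_koszulDInto_mem_strand (commute_of_mk hDcomm hT')
    (quotientDegreeLE_mono J) exhaustive (fun m hm z hz hdz => ?_) hdz
  refine KCochain.exists_sub_koszulDInto_mem_strand_sub_one
    (q := fun m => (Ideal.Quotient.mkₐ ℂ I).toLinearMap ∘ₗ proj 𝒜 m) (T' := T)
    (fun j => apply_mem_degreeLE (hD j)) (fun j x => (hT' j x).symm) (fun j m x => ?_)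
    h.mk_proj_eq_zero_iff ?_ hz hdz
  · exact (congrArg _ (proj_apply_of_homogeneous (hD j) m x)).trans (hT j _).symm
  · rw [map_symbol]
    exact hN k hk m (by omega)

theorem IsLeadingIdeal.exists_forall_koszulH [∀ n, FiniteDimensional ℂ (𝒜 n)]
    (h𝒜 : ∀ n < 0, 𝒜 n = ⊥)
    (hI : I.IsHomogeneous 𝒜) (h : IsLeadingIdeal 𝒜 I J)
    (he : ∀ j, 0 < e j) (hD : ∀ j n, ∀ x ∈ 𝒜 n, D j x ∈ 𝒜 (n + e j))
    (hDcomm : ∀ i j, Commute (D i) (D j))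
    (hT : ∀ j x, T j (Ideal.Quotient.mk I x) = Ideal.Quotient.mk I (D j x))
    [Module.Finite ℂ ((A ⧸ I) ⧸ ⨆ j, LinearMap.range (T j))]
    (hT' : ∀ j x, T' j (Ideal.Quotient.mk J x) = Ideal.Quotient.mk J (D j x)) :
    (∀ k, FiniteDimensional ℂ (KoszulH g T' k)) ∧ ∃ N, ∀ n ≥ N,
      ∑ k ∈ Finset.range (g + 1), (-1 : ℚ) ^ k * Module.finrank ℂ (KoszulH g T' k) =
        ∑ s : Finset (Fin g), (-1 : ℚ) ^ s.card *
          Module.finrank ℂ (quotientDegreeLE 𝒜 J (n + ∑ j ∈ s, e j)) := by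
  obtain ⟨N, hN⟩ := h.exists_forall_exists_sub_mem_strand h𝒜 hI he hD hDcomm hT hT'
  have hcomm := commute_of_mk hDcomm hT'
  have := finiteDimensional_degreeLE h𝒜
  have finite_quotientDegreeLE (n) : FiniteDimensional ℂ (quotientDegreeLE 𝒜 J n) := by
    unfold quotientDegreeLE
    infer_instance
  have finite_strand (n k) :=
    KCochain.finiteDimensional_strand (F := quotientDegreeLE 𝒜 J) e k n
  have hTdeg (j n) : ∀ x ∈ quotientDegreeLE 𝒜 J n, T' j x ∈ quotientDegreeLE 𝒜 J (n + e j) := by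
    rintro _ ⟨x, hx, rfl⟩
    exact ⟨D j x, apply_mem_degreeLE (hD j) n x hx, (hT' j x).symm⟩
  refine ⟨fun k => ?_, N, fun n hn => ?_⟩
  · exact KoszulH.finiteDimensional (V := fun k => KCochain.strand (quotientDegreeLE 𝒜 J) e k N)
      hcomm (hN N le_rfl k)
  · rw [← sum_neg_one_pow_mul_finrank_strand]
    exact KoszulH.sum_neg_one_pow_mul_finrank hcomm
      (fun k z hz => KCochain.koszulD_mem_strand hTdeg hz) (hN n hn)

end LeadingIdealComparison

section HilbertSeriesAsymptotics

variable {R : Type*} [CommRing R]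

theorem coeff_mul_prod_X_pow_sub_one {ι : Type*} [Fintype ι] (e : ι → ℕ) (S : PowerSeries R)
    (n : ℕ) : PowerSeries.coeff (n + ∑ j, e j) (S * ∏ j, (PowerSeries.X ^ e j - 1)) =
      ∑ s : Finset ι, (-1) ^ s.card * PowerSeries.coeff (n + ∑ j ∈ s, e j) S := by
  classical
  have expand : S * ∏ j, (PowerSeries.X ^ e j - 1) = ∑ t : Finset ι,
      PowerSeries.C ((-1) ^ tᶜ.card) * (PowerSeries.X ^ (∑ j ∈ t, e j) * S) := by
    simp only [sub_eq_add_neg]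
    rw [Finset.prod_add, Finset.mul_sum, Finset.powerset_univ]
    refine Finset.sum_congr rfl fun t _ => ?_
    rw [Finset.prod_pow_eq_pow_sum, Finset.prod_const, ← Finset.compl_eq_univ_sdiff, map_pow,
      map_neg, map_one]
    ring
  rw [expand, map_sum, ← Equiv.sum_comp compl_involutive.toPerm]
  refine Finset.sum_congr rfl fun s _ => ?_
  have split_degree : n + ∑ j, e j = n + ∑ j ∈ s, e j + ∑ j ∈ sᶜ, e j := by
    rw [add_assoc, Finset.sum_add_sum_compl]
  rw [Function.Involutive.coe_toPerm, compl_compl, PowerSeries.coeff_C_mul, split_degree,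
    PowerSeries.coeff_X_pow_mul]

theorem exists_polynomial_coe_eq_mul_one_sub_X {U : PowerSeries R} {χ : R} {N : ℕ}
    (hU : ∀ n ≥ N, PowerSeries.coeff n U = χ) :
    ∃ P : Polynomial R, (P : PowerSeries R) = U * (1 - PowerSeries.X) ∧ P.eval 1 = χ := by
  have split : U = (PowerSeries.trunc N U : PowerSeries R) +
      PowerSeries.C χ * PowerSeries.X ^ N * PowerSeries.mk 1 := by
    ext n
    rw [map_add, Polynomial.coeff_coe, PowerSeries.coeff_trunc, mul_assoc, PowerSeries.coeff_C_mul,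
      PowerSeries.coeff_X_pow_mul', PowerSeries.coeff_mk]
    obtain hn | hn := lt_or_ge n N
    · rw [if_pos hn, if_neg hn.not_ge, mul_zero, add_zero]
    · rw [if_neg hn.not_gt, if_pos hn, zero_add, hU n hn, Pi.one_apply, mul_one]
  refine ⟨PowerSeries.trunc N U * (1 - Polynomial.X) + Polynomial.C χ * Polynomial.X ^ N, ?_, ?_⟩
  · conv_rhs => rw [split, add_mul, mul_assoc _ (PowerSeries.mk 1),
      PowerSeries.mk_one_mul_one_sub_eq_one, mul_one]
    simp
  · simp

theorem eval_one_mul_prod_of_mul_prod_one_sub_X_pow [IsDomain R] {σ ι κ : Type*} [Fintype σ]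
    [Fintype ι] [Fintype κ] (hcard : Fintype.card σ = Fintype.card ι + Fintype.card κ)
    {w : σ → ℕ} {d : ι → ℕ} {e : κ → ℕ} {P : Polynomial R}
    (hP : P * ∏ i, (1 - Polynomial.X ^ w i) = (∏ j, (1 - Polynomial.X ^ d j)) *
      ∏ j, (Polynomial.X ^ e j - 1)) :
    P.eval 1 * ∏ i, (w i : R) =
      (-1) ^ Fintype.card κ * ((∏ j, (d j : R)) * ∏ j, (e j : R)) := by
  have one_sub_X_ne_zero : (1 - Polynomial.X : Polynomial R) ≠ 0 := by
    rw [← neg_ne_zero, neg_sub, ← Polynomial.C_1]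
    exact Polynomial.X_sub_C_ne_zero 1
  have one_sub_X_pow (a : ℕ) : (1 - Polynomial.X ^ a : Polynomial R) =
      (1 - Polynomial.X) * ∑ i ∈ Finset.range a, Polynomial.X ^ i :=
    (mul_neg_geom_sum Polynomial.X a).symm
  have X_pow_sub_one (a : ℕ) : (Polynomial.X ^ a - 1 : Polynomial R) =
      -1 * ((1 - Polynomial.X) * ∑ i ∈ Finset.range a, Polynomial.X ^ i) := by
    rw [← one_sub_X_pow, neg_one_mul, neg_sub]
  have eval_geom_sum (a : ℕ) :
      (∑ i ∈ Finset.range a, Polynomial.X ^ i : Polynomial R).eval 1 = a := by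
    simp [Polynomial.eval_finsetSum]
  simp only [one_sub_X_pow, X_pow_sub_one, Finset.prod_mul_distrib, Finset.prod_const,
    Finset.card_univ, hcard] at hP
  have cancelled : P * ∏ i, ∑ k ∈ Finset.range (w i), Polynomial.X ^ k =
      (-1) ^ Fintype.card κ * ((∏ j, ∑ k ∈ Finset.range (d j), Polynomial.X ^ k) *
        ∏ j, ∑ k ∈ Finset.range (e j), Polynomial.X ^ k) :=
    mul_left_cancel₀ (pow_ne_zero (Fintype.card ι + Fintype.card κ) one_sub_X_ne_zero) (by
      rw [mul_left_comm, hP]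
      ring)
  simpa only [Polynomial.eval_mul, Polynomial.eval_prod, Polynomial.eval_pow,
    Polynomial.eval_neg, Polynomial.eval_one, eval_geom_sum] using
    congrArg (Polynomial.eval 1) cancelled

theorem coe_polynomial_prod {ι : Type*} [Fintype ι] (p : ι → Polynomial R) :
    ((∏ i, p i : Polynomial R) : PowerSeries R) = ∏ i, (p i : PowerSeries R) :=
  map_prod Polynomial.coeToPowerSeries.ringHom p _

theorem mul_prod_eq_of_eventually_alternating_sum_eq [IsDomain R] {σ ι κ : Type*} [Fintype σ]
    [Fintype ι] [Fintype κ] (hcard : Fintype.card σ = Fintype.card ι + Fintype.card κ)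
    {w : σ → ℕ} {d : ι → ℕ} {e : κ → ℕ} {S : PowerSeries R} {χ : R} {N : ℕ}
    (hS : S * (1 - PowerSeries.X) * ∏ i, (1 - PowerSeries.X ^ w i) =
      ∏ j, (1 - PowerSeries.X ^ d j))
    (hχ : ∀ n ≥ N,
      ∑ s : Finset κ, (-1) ^ s.card * PowerSeries.coeff (n + ∑ j ∈ s, e j) S = χ) :
    χ * ∏ i, (w i : R) = (-1) ^ Fintype.card κ * ((∏ j, (d j : R)) * ∏ j, (e j : R)) := by
  have coeff_eq : ∀ n ≥ N + ∑ j, e j,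
      PowerSeries.coeff n (S * ∏ j, (PowerSeries.X ^ e j - 1)) = χ := fun n hn => by
    obtain ⟨n, rfl⟩ := Nat.exists_eq_add_of_le hn
    rw [add_right_comm, coeff_mul_prod_X_pow_sub_one]
    exact hχ _ (Nat.le_add_right N n)
  obtain ⟨P, hP, rfl⟩ := exists_polynomial_coe_eq_mul_one_sub_X coeff_eq
  refine eval_one_mul_prod_of_mul_prod_one_sub_X_pow hcard (Polynomial.coe_injective R ?_)
  simp only [Polynomial.coe_mul, coe_polynomial_prod, Polynomial.coe_sub, Polynomial.coe_pow,
    Polynomial.coe_one, Polynomial.coe_X, hP, ← hS]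
  ring

end HilbertSeriesAsymptotics

section WeightedDeformation

open RingTheory.Sequence GradedAlgebra

theorem ofList_ofFn {A : Type*} [CommRing A] {r : ℕ} (u : Fin r → A) :
    Ideal.ofList (List.ofFn u) = Ideal.span (Set.range u) :=
  congrArg Ideal.span (Set.ext fun x => List.mem_ofFn' u x)

theorem weightedTotalDegree_sub_C_sub_self {K σ : Type*} [CommRing K] (w : σ → ℕ)
    (p : MvPolynomial σ K) (c : K) : (p - C c - p).weightedTotalDegree w = 0 := by
  rw [sub_sub_cancel_left, ← map_neg]
  exact isWeightedHomogeneous_zero_iff_weightedTotalDegree_eq_zero.1 (isWeightedHomogeneous_C w _)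

variable {K σ : Type*} [Field K] {w : σ → ℕ}

theorem mem_degreeLE_weightGrading {n : ℤ} {p : MvPolynomial σ K}
    (hp : ((p.weightedTotalDegree w : ℕ) : ℤ) ≤ n) : p ∈ degreeLE (weightGrading K w) n := by
  refine mem_degreeLE.2 fun k hk => MvPolynomial.ext _ _ fun s => ?_
  rw [coeff_proj_weightGrading, coeff_zero, ite_eq_right_iff]
  intro hs
  by_contra hps
  have := le_weightedTotalDegree w (mem_support_iff.2 hps)
  omega

variable {r : ℕ} {f p : Fin r → MvPolynomial σ K} {d : Fin r → ℕ}

theorem isHomogeneous_span_range (hf : ∀ j, (f j).IsWeightedHomogeneous w (d j)) :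
    (Ideal.span (Set.range f)).IsHomogeneous (weightGrading K w) := by
  refine Ideal.homogeneous_span _ _ ?_
  rintro _ ⟨j, rfl⟩
  exact ⟨d j, mem_weightGrading_natCast.2 (hf j)⟩

theorem isLeadingIdeal_span_range (hf : ∀ j, (f j).IsWeightedHomogeneous w (d j))
    (hp : ∀ j, (p j - f j).weightedTotalDegree w < d j)
    (hreg : IsWeaklyRegular (MvPolynomial σ K ⧸ (⊥ : Ideal (MvPolynomial σ K))) (List.ofFn f)) :
    IsLeadingIdeal (weightGrading K w) (Ideal.span (Set.range f)) (Ideal.span (Set.range p)) := by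
  have bot_homogeneous := Ideal.IsHomogeneous.bot (weightGrading K w)
  have leading_form (j) : p j ∈ degreeLE (weightGrading K w) (d j) ∧
      proj (weightGrading K w) (d j) (p j) = f j := by
    have hfj := mem_weightGrading_natCast.2 (hf j)
    have hpj : p j - f j ∈ degreeLE (weightGrading K w) (d j - 1) :=
      mem_degreeLE_weightGrading (by have := hp j; omega)
    have split : p j = (p j - f j) + f j := (sub_add_cancel _ _).symm
    rw [split]
    refine ⟨add_mem (degreeLE_mono (by omega) hpj) (le_degreeLE _ hfj), ?_⟩
    rw [map_add, mem_degreeLE.1 hpj _ (by omega), zero_add, proj_eq_self_iff.2 hfj]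
  rw [← ofList_ofFn, ← ofList_ofFn, ← bot_sup_eq (Ideal.ofList (List.ofFn f)),
    ← bot_sup_eq (Ideal.ofList (List.ofFn p))]
  refine (IsLeadingIdeal.of_isHomogeneous bot_homogeneous).sup_ofList ?_ bot_homogeneous hreg
  refine List.forall₂_iff_get.2 ⟨by rw [List.length_ofFn, List.length_ofFn], fun j hj _ => ?_⟩
  simp only [List.get_eq_getElem, List.getElem_ofFn]
  exact ⟨_, leading_form ⟨j, by simpa only [List.length_ofFn] using hj⟩⟩

end WeightedDeformation

section KoszulEulerCharacteristic

open RingTheory.Sequence GradedAlgebra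

variable {σ : Type} {r g : ℕ} {w : σ → ℕ} {f : Fin r → MvPolynomial σ ℂ}
variable {d : Fin r → ℕ} {D : Fin g → Module.End ℂ (MvPolynomial σ ℂ)} {e : Fin g → ℕ}

theorem apply_mem_weightGrading {x : MvPolynomial σ ℂ}
    (hDhom : ∀ j (n : ℕ), ∀ x : MvPolynomial σ ℂ, x.IsWeightedHomogeneous w n →
      (D j x).IsWeightedHomogeneous w (n + e j)) (j : Fin g) (n : ℤ)
    (hx : x ∈ weightGrading ℂ w n) : D j x ∈ weightGrading ℂ w (n + e j) := by
  obtain hn | hn := lt_or_ge n 0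
  · rw [weightGrading_eq_bot w n hn, Submodule.mem_bot] at hx
    rw [hx, map_zero]
    exact zero_mem _
  · lift n to ℕ using hn
    rw [← Nat.cast_add]
    exact mem_weightGrading_natCast.2 (hDhom j n x (mem_weightGrading_natCast.1 hx))

variable [Fintype σ]

theorem IsLeadingIdeal.koszulH_eulerCharacteristic
    (hcard : Fintype.card σ = r + g) (hw : ∀ i, 0 < w i)
    (hf : ∀ j, (f j).IsWeightedHomogeneous w (d j))
    (hreg : IsWeaklyRegular (MvPolynomial σ ℂ ⧸ (⊥ : Ideal (MvPolynomial σ ℂ))) (List.ofFn f))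
    (he : ∀ j, 0 < e j)
    (hDhom : ∀ j (n : ℕ), ∀ x : MvPolynomial σ ℂ, x.IsWeightedHomogeneous w n →
      (D j x).IsWeightedHomogeneous w (n + e j))
    (hDcomm : ∀ i j, Commute (D i) (D j))
    {T : Fin g → Module.End ℂ (MvPolynomial σ ℂ ⧸ Ideal.span (Set.range f))}
    (hT : ∀ j x, T j (Ideal.Quotient.mk (Ideal.span (Set.range f)) x) =
      Ideal.Quotient.mk (Ideal.span (Set.range f)) (D j x))
    [FiniteDimensional ℂ
      ((MvPolynomial σ ℂ ⧸ Ideal.span (Set.range f)) ⧸ ⨆ j, LinearMap.range (T j))]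
    {J : Ideal (MvPolynomial σ ℂ)}
    (hJ : IsLeadingIdeal (weightGrading ℂ w) (Ideal.span (Set.range f)) J)
    {T' : Fin g → Module.End ℂ (MvPolynomial σ ℂ ⧸ J)}
    (hT' : ∀ j x, T' j (Ideal.Quotient.mk J x) = Ideal.Quotient.mk J (D j x)) :
    (∀ k, FiniteDimensional ℂ (KoszulH g T' k)) ∧
      ∑ k ∈ Finset.range (g + 1), (-1 : ℚ) ^ k * Module.finrank ℂ (KoszulH g T' k) =
        (-1) ^ g * ((∏ j, (d j : ℚ)) * ∏ j, (e j : ℚ)) / ∏ i, (w i : ℚ) := by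
  have finite_grade := finiteDimensional_weightGrading (K := ℂ) hw
  have grade_neg := weightGrading_eq_bot (K := ℂ) w
  obtain ⟨finite_cohomology, N, hN⟩ := hJ.exists_forall_koszulH grade_neg
    (isHomogeneous_span_range hf) (e := fun j => (e j : ℤ)) (fun j => Nat.cast_pos.2 (he j))
    (fun j n _ => apply_mem_weightGrading hDhom j n) hDcomm hT hT'
  refine ⟨finite_cohomology, ?_⟩
  have prod_w_ne_zero : ∏ i, (w i : ℚ) ≠ 0 :=
    Finset.prod_ne_zero_iff.2 fun i _ => Nat.cast_ne_zero.2 (hw i).ne'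
  rw [eq_div_iff prod_w_ne_zero]
  have hilbert := hilbertSeries_mul_prod hw hf hreg
  rw [ofList_ofFn, ← hJ.mk_finrank_quotientDegreeLE_mul grade_neg] at hilbert
  refine (mul_prod_eq_of_eventually_alternating_sum_eq (e := e) (N := N.toNat)
    (by simpa using hcard) hilbert fun n hn => ?_).trans (by rw [Fintype.card_fin])
  rw [hN n (by omega)]
  refine Finset.sum_congr rfl fun s _ => ?_
  rw [PowerSeries.coeff_mk, Nat.cast_add, Nat.cast_sum]

theorem statement10_general
    (hcard : Fintype.card σ = r + g) (hw : ∀ i, 0 < w i)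
    (hf : ∀ j, (f j).IsWeightedHomogeneous w (d j))
    (hdim : ringKrullDim (MvPolynomial σ ℂ ⧸ Ideal.span (Set.range f)) ≤ (g : WithBot ℕ∞))
    (he : ∀ j, 0 < e j)
    (hDhom : ∀ j (n : ℕ), ∀ x : MvPolynomial σ ℂ, x.IsWeightedHomogeneous w n →
      (D j x).IsWeightedHomogeneous w (n + e j))
    (hDcomm : ∀ i j, Commute (D i) (D j))
    {T : Fin g → Module.End ℂ (MvPolynomial σ ℂ ⧸ Ideal.span (Set.range f))}
    (hT : ∀ j x, T j (Ideal.Quotient.mk (Ideal.span (Set.range f)) x) =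
      Ideal.Quotient.mk (Ideal.span (Set.range f)) (D j x))
    (hfin : FiniteDimensional ℂ
      ((MvPolynomial σ ℂ ⧸ Ideal.span (Set.range f)) ⧸ ⨆ j, LinearMap.range (T j)))
    {p : Fin r → MvPolynomial σ ℂ} (hp : ∀ j, (p j - f j).weightedTotalDegree w < d j)
    {Tp : Fin g → Module.End ℂ (MvPolynomial σ ℂ ⧸ Ideal.span (Set.range p))}
    (hTp : ∀ j x, Tp j (Ideal.Quotient.mk (Ideal.span (Set.range p)) x) =
      Ideal.Quotient.mk (Ideal.span (Set.range p)) (D j x)) :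
    (∀ k, FiniteDimensional ℂ (KoszulH g Tp k)) ∧
      ∑ k ∈ Finset.range (g + 1), (-1 : ℚ) ^ k * Module.finrank ℂ (KoszulH g Tp k) =
        ∑ k ∈ Finset.range (g + 1), (-1 : ℚ) ^ k * Module.finrank ℂ (KoszulH g T k) ∧
      ∑ k ∈ Finset.range (g + 1), (-1 : ℚ) ^ k * Module.finrank ℂ (KoszulH g Tp k) =
        (-1) ^ g * ((∏ j, (d j : ℚ)) * ∏ j, (e j : ℚ)) / ∏ i, (w i : ℚ) := by
  have hreg := isWeaklyRegular_of_ringKrullDim_quotient_le hw (fs := List.ofFn f) (g := g)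
    (fun q hq => by
      obtain ⟨j, rfl⟩ := (List.mem_ofFn' f q).1 hq
      exact ⟨d j, (Nat.zero_le _).trans_lt (hp j), hf j⟩)
    (by rw [List.length_ofFn, hcard]) (by rwa [ofList_ofFn])
  have hI : IsLeadingIdeal (weightGrading ℂ w) (Ideal.span (Set.range f))
      (Ideal.span (Set.range f)) := .of_isHomogeneous (isHomogeneous_span_range hf)
  have at_origin :=
    hI.koszulH_eulerCharacteristic hcard hw hf hreg he hDhom hDcomm hT (T' := T) hT
  have at_deformation := (isLeadingIdeal_span_range hf hp hreg).koszulH_eulerCharacteristic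
    hcard hw hf hreg he hDhom hDcomm hT hTp
  exact ⟨at_deformation.1, at_deformation.2.trans at_origin.2.symm, at_deformation.2⟩

end KoszulEulerCharacteristic

/-- Setup as in the paper: `R = ℂ[a_1,…,a_m]` graded by positive weights
`w`, `g ≤ m`, `f_1,…,f_{m−g}` weighted-homogeneous of positive degrees `d_j` with
`dim R/(f) ≤ g`; `D_1,…,D_g` pairwise commuting ℂ-derivations of `R`, homogeneous of positive
degrees `e_j`, killing the `f_k`; Assumption 1 holds for `A_0 = R/(f_1,…,f_{m−g})` (with
induced operators `T_j`). Then for every `c ∈ ℂ^{m−g}`, with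
`A_c = R/(f_1 − c_1,…,f_{m−g} − c_{m−g})` and induced operators `Tc_j`, each cohomology group
`H^k(C_c^•)` (`0 ≤ k ≤ g`) of the Koszul-type complex on `A_c` is finite-dimensional over ℂ,
and `Σ_k (−1)^k dim H^k(C_c^•) = Σ_k (−1)^k dim H^k(C_0^•)
  = (−1)^g (∏ d_j)(∏ e_j)/(∏ w_i)`. -/
theorem statement10 (m g : ℕ) (hg : g ≤ m) (w : Fin m → ℕ) (hw : ∀ i, 0 < w i)
    (f : Fin (m - g) → MvPolynomial (Fin m) ℂ) (d : Fin (m - g) → ℕ) (hd : ∀ j, 0 < d j)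
    (hf : ∀ j, (f j).IsWeightedHomogeneous w (d j))
    (hdim : ringKrullDim (MvPolynomial (Fin m) ℂ ⧸ Ideal.span (Set.range f)) ≤
      (g : WithBot (WithTop ℕ)))
    (D : Fin g → Derivation ℂ (MvPolynomial (Fin m) ℂ) (MvPolynomial (Fin m) ℂ))
    (e : Fin g → ℕ) (he : ∀ j, 0 < e j)
    (hDhom : ∀ (j : Fin g) (n : ℕ) (x : MvPolynomial (Fin m) ℂ),
      x.IsWeightedHomogeneous w n → (D j x).IsWeightedHomogeneous w (n + e j))
    (hDcomm : ∀ (i j : Fin g) (x : MvPolynomial (Fin m) ℂ), D i (D j x) = D j (D i x))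
    (hDf : ∀ (j : Fin g) (k : Fin (m - g)), D j (f k) = 0)
    (T : Fin g → Module.End ℂ (MvPolynomial (Fin m) ℂ ⧸ Ideal.span (Set.range f)))
    (hT : ∀ (j : Fin g) (x : MvPolynomial (Fin m) ℂ),
      T j (Ideal.Quotient.mk (Ideal.span (Set.range f)) x) =
        Ideal.Quotient.mk (Ideal.span (Set.range f)) (D j x))
    (hfin : FiniteDimensional ℂ
      ((MvPolynomial (Fin m) ℂ ⧸ Ideal.span (Set.range f)) ⧸
        (⨆ j : Fin g, LinearMap.range (T j))))
    (c : Fin (m - g) → ℂ)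
    (Tc : Fin g → Module.End ℂ
      (MvPolynomial (Fin m) ℂ ⧸
        Ideal.span (Set.range fun j : Fin (m - g) => f j - MvPolynomial.C (c j))))
    (hTc : ∀ (j : Fin g) (x : MvPolynomial (Fin m) ℂ),
      Tc j (Ideal.Quotient.mk
          (Ideal.span (Set.range fun j : Fin (m - g) => f j - MvPolynomial.C (c j))) x) =
        Ideal.Quotient.mk
          (Ideal.span (Set.range fun j : Fin (m - g) => f j - MvPolynomial.C (c j)))
          (D j x)) :
    (∀ k ≤ g, FiniteDimensional ℂ (KoszulH g Tc k)) ∧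
      ∑ k ∈ Finset.range (g + 1), (-1 : ℚ) ^ k * (Module.finrank ℂ (KoszulH g Tc k) : ℚ) =
        ∑ k ∈ Finset.range (g + 1), (-1 : ℚ) ^ k * (Module.finrank ℂ (KoszulH g T k) : ℚ) ∧
      ∑ k ∈ Finset.range (g + 1), (-1 : ℚ) ^ k * (Module.finrank ℂ (KoszulH g Tc k) : ℚ) =
        (-1 : ℚ) ^ g * ((∏ j : Fin (m - g), (d j : ℚ)) * ∏ j : Fin g, (e j : ℚ)) /
          ∏ i : Fin m, (w i : ℚ) := by
  obtain ⟨finite, euler⟩ := statement10_general (D := fun j => (D j).toLinearMap)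
    (by rw [Fintype.card_fin, Nat.sub_add_cancel hg]) hw hf hdim he hDhom
    (fun i j => LinearMap.ext (hDcomm i j)) hT hfin
    (fun j => (weightedTotalDegree_sub_C_sub_self w (f j) (c j)).trans_lt (hd j)) hTc
  exact ⟨fun k _ => finite k, euler⟩

end
end

section
/- Let R = ℂ[a_1,…,a_m] be graded by positive integer weights w_1,…,w_m, let g ≤ m, let f_1,…,f_{m−g} ∈ R be weighted-homogeneous of positive weighted degrees such that the Krull dimension of A_0 = R/(f_1,…,f_{m−g}) is at most g. Let D_1,…,D_g be pairwise commuting ℂ-derivations of R, homogeneous of positive degrees, with D_j f_k = 0 for all j, k. If A_0/(D_1 A_0 + ⋯ + D_g A_0) is finite-dimensional over ℂ (Assumption 1), then R is finitely generated as a module over the commutative ℂ-subalgebra 𝒟_F of End_ℂ(R) generated by the multiplication operators by f_1,…,f_{m−g} together with the derivations D_1,…,D_g. -/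
open MvPolynomial

/-!
The theorem is a graded Nakayama lemma for modules over an algebra of degree-raising operators. If
`R = N + ∑ f_k R + ∑ D_j R` with `N` finite-dimensional, then, enlarging `N`, we may assume that
`N` is spanned by homogeneous elements. Comparing components of degree `n`, every homogeneous
element of degree `n` is an element of `N` plus images under the `f_k` and `D_j` of elements of
degree `< n`, so by induction on `n` it lies in the `𝒟_F`-module generated by `N`.
-/

open DirectSum
open scoped Pointwise

section Homogeneous

variable {K V ι : Type*} [Semiring K] [AddCommMonoid V] [Module K V] [DecidableEq ι]
  (ℳ : ι → Submodule K V) [Decomposition ℳ]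

/-- The projection of a graded module onto its component of degree `n`, as an endomorphism of the
whole module. -/
def homogeneousProj (n : ι) : V →ₗ[K] V :=
  (ℳ n).subtype ∘ₗ DirectSum.component K ι (fun i => ℳ i) n ∘ₗ (decomposeLinearEquiv ℳ).toLinearMap

theorem homogeneousProj_of_mem {n : ι} {x : V} (hx : x ∈ ℳ n) : homogeneousProj ℳ n x = x :=
  decompose_of_mem_same ℳ hx

theorem homogeneousProj_of_mem_ne {i n : ι} {x : V} (hx : x ∈ ℳ i) (hin : i ≠ n) :
    homogeneousProj ℳ n x = 0 :=
  decompose_of_mem_ne ℳ hx hin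

theorem isHomogeneous_span {s : Set V} (hs : ∀ x ∈ s, SetLike.IsHomogeneousElem ℳ x) :
    (Submodule.span K s).IsHomogeneous ℳ := by
  intro n
  suffices Submodule.span K s ≤ (Submodule.span K s).comap (homogeneousProj ℳ n) from this
  rw [Submodule.span_le]
  intro x hx
  obtain ⟨i, hi⟩ := hs x hx
  rw [SetLike.mem_coe, Submodule.mem_comap]
  rcases eq_or_ne i n with rfl | hin
  · exact (homogeneousProj_of_mem ℳ hi).symm ▸ Submodule.subset_span hx
  · exact (homogeneousProj_of_mem_ne ℳ hi hin).symm ▸ zero_mem _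

theorem exists_fg_isHomogeneous_ge {N : Submodule K V} (hN : N.FG) :
    ∃ N' : Submodule K V, N'.FG ∧ N'.IsHomogeneous ℳ ∧ N ≤ N' := by
  classical
  obtain ⟨t, rfl⟩ := hN
  let u : Finset V := t.biUnion fun y =>
    (decompose ℳ y).support.image fun i => (decompose ℳ y i : V)
  refine ⟨Submodule.span K u, ⟨u, rfl⟩, isHomogeneous_span ℳ fun x hx => ?_,
    Submodule.span_le.2 fun y hy => ?_⟩
  · obtain ⟨y, -, hx⟩ := Finset.mem_biUnion.1 hx
    obtain ⟨i, -, rfl⟩ := Finset.mem_image.1 hx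
    exact ⟨i, (decompose ℳ y i).2⟩
  · rw [SetLike.mem_coe, ← sum_support_decompose ℳ y]
    exact Submodule.sum_mem _ fun i hi => Submodule.subset_span <|
      Finset.mem_biUnion.2 ⟨y, hy, Finset.mem_image_of_mem _ hi⟩

end Homogeneous

section RaisesDegree

variable {K V ι : Type*} [Semiring K] [AddCommMonoid V] [Module K V] [LT ι]
  (ℳ : ι → Submodule K V)

/-- An endomorphism of a graded module raises degrees if it maps each graded component into a
single component of strictly larger degree. The shift is not required to be constant. -/
def RaisesDegree (T : Module.End K V) : Prop :=
  ∀ i, ∃ j, i < j ∧ ∀ x ∈ ℳ i, T x ∈ ℳ j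

variable {ℳ}

theorem RaisesDegree.homogeneousProj_apply_mem [DecidableEq ι] [Decomposition ℳ]
    {T : Module.End K V} (hT : RaisesDegree ℳ T) {M : Submodule K V} (hTM : ∀ x ∈ M, T x ∈ M)
    {n : ι} (hM : ∀ i < n, ℳ i ≤ M) (x : V) :
    homogeneousProj ℳ n (T x) ∈ M := by
  induction x using Decomposition.inductionOn ℳ with
  | zero => simp only [map_zero, zero_mem]
  | @homogeneous i x =>
    obtain ⟨j, hij, hTj⟩ := hT i
    have hTx : T x ∈ ℳ j := hTj x x.2
    rcases eq_or_ne j n with rfl | hjn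
    · exact (homogeneousProj_of_mem ℳ hTx).symm ▸ hTM x (hM i hij x.2)
    · exact (homogeneousProj_of_mem_ne ℳ hTx hjn).symm ▸ zero_mem M
  | add x y hx hy => simpa only [map_add] using add_mem hx hy

end RaisesDegree

theorem raisesDegree_mulLeft {K R ι : Type*} [CommSemiring K] [Semiring R] [Algebra K R]
    [AddZeroClass ι] [LT ι] [AddRightStrictMono ι] {𝒜 : ι → Submodule K R} [SetLike.GradedMul 𝒜]
    {d : ι} (hd : 0 < d) {a : R} (ha : a ∈ 𝒜 d) :
    RaisesDegree 𝒜 (LinearMap.mulLeft K a) :=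
  fun i => ⟨d + i, lt_add_of_pos_left i hd, fun _ hx => SetLike.mul_mem_graded ha hx⟩

theorem span_adjoin_eq_top_of_raisesDegree {K V ι : Type*} [CommSemiring K] [AddCommMonoid V]
    [Module K V] [DecidableEq ι] [LT ι] [WellFoundedLT ι] {ℳ : ι → Submodule K V}
    [Decomposition ℳ] {S : Set (Module.End K V)} (hS : ∀ T ∈ S, RaisesDegree ℳ T)
    {N : Submodule K V} (hN : N.IsHomogeneous ℳ)
    (hNS : N ⊔ ⨆ T ∈ S, LinearMap.range T = ⊤) :
    Submodule.span (Algebra.adjoin K S) (N : Set V) = ⊤ := by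
  classical
  let M := (Submodule.span (Algebra.adjoin K S) (N : Set V)).restrictScalars K
  have apply_mem : ∀ T ∈ S, ∀ x ∈ M, T x ∈ M := fun T hT x hx =>
    Submodule.smul_mem (Submodule.span _ _) (⟨T, Algebra.subset_adjoin hT⟩ : Algebra.adjoin K S) hx
  have component_le : ∀ n, ℳ n ≤ M := by
    intro n
    induction n using WellFoundedLT.induction with
    | ind n ih =>
      have top_le : ⊤ ≤ M.comap (homogeneousProj ℳ n) := by
        rw [← hNS]
        refine sup_le (fun x hx => Submodule.subset_span (hN n hx)) (iSup₂_le fun T hT => ?_)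
        rintro _ ⟨x, rfl⟩
        exact (hS T hT).homogeneousProj_apply_mem (apply_mem T hT) ih x
      exact fun x hx => homogeneousProj_of_mem ℳ hx ▸ top_le (Submodule.mem_top (x := x))
  refine Submodule.eq_top_iff'.2 fun x => ?_
  rw [← sum_support_decompose ℳ x]
  exact Submodule.sum_mem _ fun i _ => component_le i (decompose ℳ x i).2

theorem exists_fg_sup_eq_top_of_cofg {K V : Type*} [Ring K] [AddCommGroup V] [Module K V]
    {P : Submodule K V} (hP : P.CoFG) : ∃ N : Submodule K V, N.FG ∧ N ⊔ P = ⊤ := by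
  obtain ⟨n, v, hv⟩ := hP.exists_fin
  choose u hu using fun i => P.mkQ_surjective (v i)
  refine ⟨Submodule.span K (Set.range u), Submodule.fg_span (Set.finite_range u), ?_⟩
  rw [sup_comm, ← Submodule.comap_map_mkQ, Submodule.map_span, ← Set.range_comp,
    show P.mkQ ∘ u = v from funext hu, hv, Submodule.comap_top]

theorem finite_adjoin_of_raisesDegree {K V ι : Type*} [CommRing K] [AddCommGroup V]
    [Module K V] [DecidableEq ι] [LT ι] [WellFoundedLT ι] (ℳ : ι → Submodule K V)
    [Decomposition ℳ] {S : Set (Module.End K V)} (hS : ∀ T ∈ S, RaisesDegree ℳ T)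
    (hfin : (⨆ T ∈ S, LinearMap.range T).CoFG) :
    Module.Finite (Algebra.adjoin K S) V := by
  obtain ⟨N₀, hN₀, hN₀S⟩ := exists_fg_sup_eq_top_of_cofg hfin
  obtain ⟨N, ⟨t, rfl⟩, hN, hN₀N⟩ := exists_fg_isHomogeneous_ge ℳ hN₀
  have hNS : Submodule.span K (t : Set V) ⊔ ⨆ T ∈ S, LinearMap.range T = ⊤ :=
    top_le_iff.1 (hN₀S ▸ sup_le_sup_right hN₀N _)
  refine ⟨t, ?_⟩
  rw [← span_adjoin_eq_top_of_raisesDegree hS hN hNS, Submodule.span_span_of_tower]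

theorem cofg_sup_ker_of_cofg_map {K V U : Type*} [Ring K] [AddCommGroup V] [Module K V]
    [AddCommGroup U] [Module K U] {φ : V →ₗ[K] U} (hφ : Function.Surjective φ)
    {W : Submodule K V} (hW : (W.map φ).CoFG) : (W ⊔ LinearMap.ker φ).CoFG := by
  have hsurj : Function.Surjective ((W.map φ).mkQ ∘ₗ φ) := (W.map φ).mkQ_surjective.comp hφ
  have hker : LinearMap.ker ((W.map φ).mkQ ∘ₗ φ) = W ⊔ LinearMap.ker φ := by
    rw [LinearMap.ker_comp, Submodule.ker_mkQ, Submodule.comap_map_eq]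
  rw [← hker]
  exact Module.Finite.equiv (LinearMap.quotKerEquivOfSurjective _ hsurj).symm

theorem restrictScalars_span_range_eq_iSup_range_mulLeft (K : Type*) {R κ : Type*}
    [CommSemiring K] [CommSemiring R] [Algebra K R] (f : κ → R) :
    (Ideal.span (Set.range f)).restrictScalars K =
      ⨆ k, LinearMap.range (LinearMap.mulLeft K (f k)) := by
  rw [Ideal.span_range_eq_iSup, Submodule.restrictScalars_iSup]
  congr! 2 with k
  ext x
  simp only [Submodule.restrictScalars_mem, Ideal.mem_span_singleton', LinearMap.mem_range,
    LinearMap.mulLeft_apply, mul_comm]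

theorem exists_finset_span_apply_eq_top {K V : Type*} [CommSemiring K] [AddCommMonoid V]
    [Module K V] (A : Subalgebra K (Module.End K V)) [Module.Finite A V] :
    ∃ s : Finset V, Submodule.span K {y : V | ∃ p ∈ A, ∃ x ∈ s, y = p x} = ⊤ := by
  obtain ⟨s, hs⟩ := Module.Finite.fg_top (R := A) (M := V)
  have hsmul : {y : V | ∃ p ∈ A, ∃ x ∈ s, y = p x} = (Set.univ : Set A) • (s : Set V) := by
    ext y
    constructor
    · rintro ⟨p, hp, x, hx, rfl⟩
      exact ⟨⟨p, hp⟩, trivial, x, hx, rfl⟩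
    · rintro ⟨p, -, x, hx, rfl⟩
      exact ⟨p, p.2, x, hx, rfl⟩
  refine ⟨s, ?_⟩
  rw [hsmul, Submodule.span_smul_of_span_eq_top Submodule.span_univ, hs,
    Submodule.restrictScalars_top]

theorem statement11_general {K R ι κ J : Type*} [CommRing K] [CommRing R] [Algebra K R]
    [DecidableEq ι] [AddMonoid ι] [LT ι] [AddRightStrictMono ι] [WellFoundedLT ι]
    (𝒜 : ι → Submodule K R) [GradedAlgebra 𝒜]
    (f : κ → R) (d : κ → ι) (hd : ∀ k, 0 < d k) (hf : ∀ k, f k ∈ 𝒜 (d k))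
    (D : J → Module.End K R) (hD : ∀ j, RaisesDegree 𝒜 (D j))
    (hfin : Module.Finite K ((R ⧸ Ideal.span (Set.range f)) ⧸
      ⨆ j, (LinearMap.range (D j)).map
        (Ideal.Quotient.mkₐ K (Ideal.span (Set.range f))).toLinearMap)) :
    Module.Finite
      (Algebra.adjoin K (Set.range (fun k => LinearMap.mulLeft K (f k)) ∪ Set.range D)) R := by
  refine finite_adjoin_of_raisesDegree 𝒜 ?_ ?_
  · rintro _ (⟨k, rfl⟩ | ⟨j, rfl⟩)
    · exact raisesDegree_mulLeft (hd k) (hf k)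
    · exact hD j
  · have hker : LinearMap.ker (Ideal.Quotient.mkₐ K (Ideal.span (Set.range f))).toLinearMap =
        ⨆ k, LinearMap.range (LinearMap.mulLeft K (f k)) := by
      rw [← restrictScalars_span_range_eq_iSup_range_mulLeft]
      ext x
      exact Ideal.Quotient.eq_zero_iff_mem
    rw [iSup_union, iSup_range, iSup_range, ← hker, sup_comm]
    refine cofg_sup_ker_of_cofg_map (Ideal.Quotient.mkₐ_surjective K _) ?_
    rwa [Submodule.map_iSup]

/-- With `R = ℂ[a_1,…,a_m]` graded by positive weights, `g ≤ m`,
`f_1,…,f_{m−g}` weighted-homogeneous of positive weighted degrees, `dim R/(f) ≤ g`, and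
`D_1,…,D_g` pairwise commuting ℂ-derivations of `R`, homogeneous of positive degrees, with
`D_j f_k = 0`: if `A_0/(D_1A_0 + ⋯ + D_gA_0)` is finite-dimensional over ℂ (Assumption 1),
where `A_0 = R/(f_1,…,f_{m−g})`, then `R` is finitely generated as a module over the
subalgebra `𝒟_F` of `End_ℂ(R)` generated by the multiplication operators by the `f_k`
together with the derivations `D_j`; i.e. there is a finite set `s ⊆ R` such that the
elements `p x`, `p ∈ 𝒟_F`, `x ∈ s`, span `R` over ℂ. -/
theorem statement11 (m g : ℕ) (hg : g ≤ m) (w : Fin m → ℕ) (hw : ∀ i, 0 < w i)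
    (f : Fin (m - g) → MvPolynomial (Fin m) ℂ) (d : Fin (m - g) → ℕ) (hd : ∀ j, 0 < d j)
    (hf : ∀ j, (f j).IsWeightedHomogeneous w (d j))
    (hdim : ringKrullDim (MvPolynomial (Fin m) ℂ ⧸ Ideal.span (Set.range f)) ≤
      (g : WithBot (WithTop ℕ)))
    (D : Fin g → Derivation ℂ (MvPolynomial (Fin m) ℂ) (MvPolynomial (Fin m) ℂ))
    (e : Fin g → ℕ) (he : ∀ j, 0 < e j)
    (hDhom : ∀ (j : Fin g) (n : ℕ) (x : MvPolynomial (Fin m) ℂ),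
      x.IsWeightedHomogeneous w n → (D j x).IsWeightedHomogeneous w (n + e j))
    (hDcomm : ∀ (i j : Fin g) (x : MvPolynomial (Fin m) ℂ), D i (D j x) = D j (D i x))
    (hDf : ∀ (j : Fin g) (k : Fin (m - g)), D j (f k) = 0)
    (hfin : FiniteDimensional ℂ
      ((MvPolynomial (Fin m) ℂ ⧸ Ideal.span (Set.range f)) ⧸
        (⨆ j : Fin g, Submodule.map
          (Ideal.Quotient.mkₐ ℂ (Ideal.span (Set.range f))).toLinearMap
          (LinearMap.range (D j).toLinearMap)))) :
    ∃ s : Finset (MvPolynomial (Fin m) ℂ),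
      Submodule.span ℂ
        { y : MvPolynomial (Fin m) ℂ |
          ∃ p ∈ Algebra.adjoin ℂ
            (Set.range (fun k : Fin (m - g) => LinearMap.mulLeft ℂ (f k)) ∪
              Set.range (fun j : Fin g => (D j).toLinearMap)),
            ∃ x ∈ s, y = p x } = ⊤ := by
  let := weightedGradedAlgebra ℂ w
  have finite_R := statement11_general (weightedHomogeneousSubmodule ℂ w) f d hd hf
    (fun j => (D j).toLinearMap)
    (fun j n => ⟨n + e j, Nat.lt_add_of_pos_right (he j), hDhom j n⟩) hfin
  exact exists_finset_span_apply_eq_top _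
end
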